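/- arXiv:2003.10346 — 8 statements merged into one kernel-verified Lean document; each statement's English description precedes it below -/
import Mathlib

section
/- For fixed β ∈ (0,2) and t₁, t₂ ∈ (0,∞), the quantity Ψ_R(t₁,t₂;s) = R^{β−4} ∫_{ℝ²×ℝ²} φ_{t₁,R}(s,y) φ_{t₂,R}(s,z) ‖y−z‖^{−β} dy dz is uniformly bounded over s ∈ [0, min(t₁,t₂)] and R > 0; more precisely there is a constant C (depending only on β, t₁, t₂) such that Ψ_R(t₁,t₂;s) ≤ C for all s ∈ [0, min(t₁,t₂)] and all R > 0. -/
/-!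
The kernel `G a` is nonnegative with mass proportional to `a` (`lintegral_G`). Unfolding both
factors `phi` and applying Tonelli, the double integral becomes an average, against the kernels
`G (t₁ - s)` and `G (t₂ - s)`, of translated Riesz energies of the disc `B_R`. The Riesz kernel
`‖·‖ ^ (-β)` integrates over a disc of radius `R` to at most a constant times `R ^ (2 - β)`, wherever
its singularity lies (`lintegral_riesz`): on the part at distance less than `R` from the singularity
integrate in polar coordinates, elsewhere the kernel is at most `R ^ (-β)`. The remaining integral
over the other disc contributes `R ^ 2`, so the total is `O(R ^ (4 - β))`, uniformly in `s` and `R`.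

The whole estimate is carried out with lower Lebesgue integrals, which dominate the Bochner
integrals without any integrability hypothesis.
-/

open MeasureTheory Real

noncomputable section

/-- `ℝ²` with the Euclidean norm. -/
abbrev E2 : Type := EuclideanSpace ℝ (Fin 2)

/-- The fundamental solution of the 2D wave equation. -/
def G (t : ℝ) (x : E2) : ℝ :=
  if ‖x‖ < t then (2 * π * Real.sqrt (t ^ 2 - ‖x‖ ^ 2))⁻¹ else 0

/-- `φ_{t,R}(s,y) = ∫_{B_R} G_{t-s}(x-y) dx`. -/
def phi (t R s : ℝ) (y : E2) : ℝ :=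
  ∫ x in Metric.closedBall (0 : E2) R, G (t - s) (x - y)

/-- `Ψ_R(t₁,t₂;s) = R^{β-4} ∫∫ φ_{t₁,R}(s,y) φ_{t₂,R}(s,z) ‖y-z‖^{-β} dy dz`. -/
def Psi (β t₁ t₂ R s : ℝ) : ℝ :=
  R ^ (β - 4) * ∫ y : E2, ∫ z : E2, phi t₁ R s y * phi t₂ R s z * ‖y - z‖ ^ (-β)

/-- Mass of a radial function on a disc, in terms of a primitive of `r ↦ r * f r`. Only continuity
at the endpoints is required, so that integrable singularities of `f` at `0` and `a` are allowed. -/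
lemma lintegral_radial (f F : ℝ → ℝ) (a : ℝ) (ha : 0 ≤ a) (hf : ∀ r, 0 ≤ r → 0 ≤ f r)
    (hF : ContinuousOn F (Set.Icc 0 a))
    (hd : ∀ r ∈ Set.Ioo 0 a, HasDerivAt F (r * f r) r) :
    ∫⁻ x : E2, ENNReal.ofReal ((Set.Iio a).indicator f ‖x‖)
      = ENNReal.ofReal (2 * volume.real (Metric.ball (0 : E2) 1) * (F a - F 0)) := by
  have hint : IntegrableOn (fun r => r * f r) (Set.Ioc 0 a) :=
    intervalIntegral.integrableOn_deriv_of_nonneg hF hd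
      (fun r hr => mul_nonneg hr.1.le (hf r hr.1.le))
  have hftc : ∫ r in (0 : ℝ)..a, r * f r = F a - F 0 :=
    intervalIntegral.integral_eq_sub_of_hasDerivAt_of_le ha hF hd
      ((intervalIntegrable_iff_integrableOn_Ioc_of_le ha).2 hint)
  have hdim : Module.finrank ℝ E2 = 2 := by simp
  have hfun : ∀ r : ℝ, r ^ (Module.finrank ℝ E2 - 1) • (Set.Iio a).indicator f r
      = (Set.Iio a).indicator (fun r => r * f r) r := by
    intro r
    rw [hdim]
    by_cases h : r < a <;> simp [h]
  have hset : Set.Ioi 0 ∩ Set.Iio a = Set.Ioo 0 a := Set.Ioi_inter_Iio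
  have hI : Integrable (fun x : E2 => (Set.Iio a).indicator f ‖x‖) := by
    rw [integrable_fun_norm_addHaar volume (f := (Set.Iio a).indicator f)]
    simp_rw [hfun]
    rw [IntegrableOn, integrable_indicator_iff measurableSet_Iio, IntegrableOn,
      Measure.restrict_restrict measurableSet_Iio, Set.inter_comm, hset]
    exact hint.mono_set Set.Ioo_subset_Ioc_self
  rw [← ofReal_integral_eq_lintegral_ofReal hI
    (Filter.Eventually.of_forall fun x =>
      Set.indicator_apply_nonneg fun _ => hf _ (norm_nonneg x))]
  rw [integral_fun_norm_addHaar volume ((Set.Iio a).indicator f)]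
  simp_rw [hfun]
  rw [setIntegral_indicator measurableSet_Iio, hset, ← integral_Ioc_eq_integral_Ioo,
    ← intervalIntegral.integral_of_le ha, hftc, hdim]
  simp [mul_assoc]

/-- The wave kernel at time `a` has mass proportional to `a`. -/
lemma lintegral_G (a : ℝ) (ha : 0 ≤ a) :
    ∫⁻ x : E2, ‖G a x‖ₑ = ENNReal.ofReal (volume.real (Metric.ball (0 : E2) 1) / π * a) := by
  have h := lintegral_radial (fun r => (2 * π * √(a ^ 2 - r ^ 2))⁻¹)
    (fun r => -(2 * π)⁻¹ * √(a ^ 2 - r ^ 2)) a ha (fun r _ => by positivity)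
    (by fun_prop) (by
      intro r hr
      have hpos : 0 < a ^ 2 - r ^ 2 := by nlinarith [hr.1, hr.2]
      have h1 : HasDerivAt (fun r : ℝ => a ^ 2 - r ^ 2) (-(2 * r)) r := by
        simpa using ((hasDerivAt_id r).pow 2).const_sub (a ^ 2)
      refine ((h1.sqrt hpos.ne').const_mul (-(2 * π)⁻¹)).congr_deriv ?_
      have := (Real.sqrt_pos.2 hpos).ne'
      field_simp)
  have hG : ∀ x : E2, ‖G a x‖ₑ = ENNReal.ofReal
      ((Set.Iio a).indicator (fun r => (2 * π * √(a ^ 2 - r ^ 2))⁻¹) ‖x‖) := by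
    intro x
    unfold G
    by_cases hx : ‖x‖ < a
    · rw [if_pos hx, Set.indicator_of_mem (Set.mem_Iio.2 hx),
        Real.enorm_of_nonneg (by positivity)]
    · simp [hx]
  simp_rw [hG, h]
  congr 1
  simp [Real.sqrt_sq ha]
  field_simp

lemma measurable_G (a : ℝ) : Measurable (G a) := by
  unfold G
  exact Measurable.ite (measurableSet_lt measurable_norm measurable_const)
    (by fun_prop) measurable_const

lemma volume_closedBall_E2 (R : ℝ) (hR : 0 ≤ R) : volume (Metric.closedBall (0 : E2) R)
    = ENNReal.ofReal (R ^ 2 * volume.real (Metric.ball (0 : E2) 1)) := by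
  rw [Measure.addHaar_closedBall volume _ hR, ENNReal.ofReal_mul (by positivity),
    ofReal_measureReal (by finiteness)]
  simp

/-- The integral of the Riesz kernel over a disc of radius `R` is `O(R ^ (2 - β))`, uniformly in
the position of the singularity. -/
lemma lintegral_riesz (β : ℝ) (hβ0 : 0 < β) (hβ2 : β < 2) (R : ℝ) (hR : 0 < R) (w : E2) :
    ∫⁻ x in Metric.closedBall (0 : E2) R, ‖‖x - w‖ ^ (-β)‖ₑ
      ≤ ENNReal.ofReal
        ((2 / (2 - β) + 1) * volume.real (Metric.ball (0 : E2) 1) * R ^ (2 - β)) := by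
  have hb : 0 < 2 - β := by linarith
  have h := lintegral_radial (fun r => r ^ (-β)) (fun r => (2 - β)⁻¹ * r ^ (2 - β)) R hR.le
    (fun r hr => Real.rpow_nonneg hr _)
    (continuousOn_const.mul (continuousOn_id.rpow_const fun x _ => Or.inr hb.le)) (by
      intro r hr
      refine ((Real.hasDerivAt_rpow_const (p := 2 - β)
        (Or.inl hr.1.ne')).const_mul (2 - β)⁻¹).congr_deriv ?_
      rw [show 2 - β - 1 = 1 + -β by ring, Real.rpow_add hr.1, Real.rpow_one]
      field_simp)
  have hk : ∀ u : E2, ‖‖u‖ ^ (-β)‖ₑ ≤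
      ENNReal.ofReal ((Set.Iio R).indicator (fun r => r ^ (-β)) ‖u‖)
        + ENNReal.ofReal (R ^ (-β)) := by
    intro u
    rw [Real.enorm_of_nonneg (by positivity)]
    by_cases hu : ‖u‖ < R
    · rw [Set.indicator_of_mem (Set.mem_Iio.2 hu)]
      exact le_self_add
    · refine le_trans (ENNReal.ofReal_le_ofReal ?_) le_add_self
      exact Real.rpow_le_rpow_of_nonpos hR (not_lt.1 hu) (by linarith)
  calc _ ≤ ∫⁻ x in Metric.closedBall (0 : E2) R,
        (ENNReal.ofReal ((Set.Iio R).indicator (fun r => r ^ (-β)) ‖x - w‖)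
          + ENNReal.ofReal (R ^ (-β))) := lintegral_mono fun x => hk _
    _ = (∫⁻ x in Metric.closedBall (0 : E2) R,
          ENNReal.ofReal ((Set.Iio R).indicator (fun r => r ^ (-β)) ‖x - w‖))
        + ENNReal.ofReal (R ^ (-β)) * volume (Metric.closedBall (0 : E2) R) := by
        rw [lintegral_add_right _ measurable_const, setLIntegral_const]
    _ ≤ (∫⁻ x : E2, ENNReal.ofReal ((Set.Iio R).indicator (fun r => r ^ (-β)) ‖x - w‖))
        + ENNReal.ofReal (R ^ (-β)) * volume (Metric.closedBall (0 : E2) R) := by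
        exact add_le_add_left (setLIntegral_le_lintegral _ _) _
    _ = _ := by
        rw [lintegral_sub_right_eq_self
          (fun u : E2 => ENNReal.ofReal ((Set.Iio R).indicator (fun r => r ^ (-β)) ‖u‖)) w, h,
          volume_closedBall_E2 R hR.le, ← ENNReal.ofReal_mul (by positivity),
          Real.zero_rpow hb.ne', ← ENNReal.ofReal_add (by
            rw [mul_zero, sub_zero]; positivity) (by positivity)]
        congr 1
        rw [show R ^ (2 - β) = R ^ 2 * R ^ (-β) by
          rw [sub_eq_add_neg, Real.rpow_add hR, Real.rpow_two]]
        field_simp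
        ring

/-- Pairing `phi` with any kernel `k` costs at most the mass of `G` times the supremum over
translations of the integral of `k` over the disc: by Tonelli and the substitution `z = x - w`,
the integral of `k` over the disc can be carried out before that of `G`. -/
lemma lintegral_phi_mul (t R s : ℝ) (hs : s ≤ t) (k : E2 → ENNReal) (hk : Measurable k)
    (K : ENNReal) (hK : ∀ w, ∫⁻ x in Metric.closedBall (0 : E2) R, k (x - w) ≤ K) :
    ∫⁻ z : E2, ‖phi t R s z‖ₑ * k z
      ≤ ENNReal.ofReal (volume.real (Metric.ball (0 : E2) 1) / π * (t - s)) * K := by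
  have hG : Measurable fun x => ‖G (t - s) x‖ₑ := (measurable_G _).enorm
  calc _ ≤ ∫⁻ z : E2, ∫⁻ x in Metric.closedBall (0 : E2) R, ‖G (t - s) (x - z)‖ₑ * k z := by
        refine lintegral_mono fun z => ?_
        rw [lintegral_mul_const _ (by exact hG.comp (measurable_id.sub_const z))]
        gcongr
        exact enorm_integral_le_lintegral_enorm _
    _ = ∫⁻ x in Metric.closedBall (0 : E2) R, ∫⁻ z : E2, ‖G (t - s) (x - z)‖ₑ * k z :=
        lintegral_lintegral_swap ((hG.comp (measurable_snd.sub measurable_fst)).mul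
          (hk.comp measurable_fst)).aemeasurable
    _ = ∫⁻ x in Metric.closedBall (0 : E2) R, ∫⁻ w : E2, ‖G (t - s) w‖ₑ * k (x - w) := by
        refine lintegral_congr fun x => ?_
        rw [← lintegral_sub_left_eq_self (fun w : E2 => ‖G (t - s) w‖ₑ * k (x - w)) x]
        simp
    _ = ∫⁻ w : E2, ∫⁻ x in Metric.closedBall (0 : E2) R, ‖G (t - s) w‖ₑ * k (x - w) :=
        lintegral_lintegral_swap ((hG.comp measurable_snd).mul
          (hk.comp (measurable_fst.sub measurable_snd))).aemeasurable
    _ ≤ ∫⁻ w : E2, ‖G (t - s) w‖ₑ * K := by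
        refine lintegral_mono fun w => ?_
        rw [lintegral_const_mul _ (by exact hk.comp (measurable_id.sub_const w))]
        gcongr
        exact hK w
    _ = _ := by rw [lintegral_mul_const _ hG, lintegral_G _ (by linarith)]

/-- For `β ∈ (0,2)` and `t₁, t₂ > 0`, `Ψ_R(t₁,t₂;s)` is uniformly bounded
over `s ∈ [0, min(t₁,t₂)]` and `R > 0`. -/
theorem stmt_3 (β t₁ t₂ : ℝ) (hβ0 : 0 < β) (hβ2 : β < 2) (ht₁ : 0 < t₁) (ht₂ : 0 < t₂) :
    ∃ C : ℝ, ∀ s R : ℝ, s ∈ Set.Icc 0 (min t₁ t₂) → 0 < R →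
      Psi β t₁ t₂ R s ≤ C := by
  set V := volume.real (Metric.ball (0 : E2) 1) with hV
  have hV0 : 0 ≤ V := measureReal_nonneg
  have hb : 0 < 2 - β := by linarith
  set c := (2 / (2 - β) + 1) * V with hc
  have hc0 : 0 ≤ c := by positivity
  refine ⟨(V / π * t₁) * V * ((V / π * t₂) * c), fun s R hs hR => ?_⟩
  have hs1 : s ≤ t₁ := hs.2.trans (min_le_left _ _)
  have hs2 : s ≤ t₂ := hs.2.trans (min_le_right _ _)
  have hinner : ∀ y : E2, ∫⁻ z : E2, ‖phi t₂ R s z‖ₑ * ‖‖y - z‖ ^ (-β)‖ₑ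
      ≤ ENNReal.ofReal ((V / π * t₂) * (c * R ^ (2 - β))) := by
    intro y
    refine (lintegral_phi_mul t₂ R s hs2 (fun z => ‖‖y - z‖ ^ (-β)‖ₑ) (by fun_prop)
      (ENNReal.ofReal (c * R ^ (2 - β))) fun w => ?_).trans ?_
    · have h := lintegral_riesz β hβ0 hβ2 R hR (y + w)
      refine le_of_eq_of_le (lintegral_congr fun x => ?_) h
      rw [norm_sub_rev, show x - w - y = x - (y + w) by abel]
    · rw [← ENNReal.ofReal_mul (by have := sub_nonneg.2 hs2; positivity)]
      gcongr
      linarith [hs.1]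
  have houter : ∫⁻ y : E2, ‖phi t₁ R s y‖ₑ ≤ ENNReal.ofReal ((V / π * t₁) * (R ^ 2 * V)) := by
    have h := lintegral_phi_mul t₁ R s hs1 (fun _ => 1) measurable_const
      (ENNReal.ofReal (R ^ 2 * V)) (fun w => by
        rw [setLIntegral_const, one_mul, volume_closedBall_E2 R hR.le])
    simp only [mul_one] at h
    refine h.trans ?_
    rw [← ENNReal.ofReal_mul (by have := sub_nonneg.2 hs1; positivity)]
    gcongr
    linarith [hs.1]
  have hmain : ‖∫ y : E2, ∫ z : E2, phi t₁ R s y * phi t₂ R s z * ‖y - z‖ ^ (-β)‖ₑ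
      ≤ ENNReal.ofReal
        (((V / π * t₁) * (R ^ 2 * V)) * ((V / π * t₂) * (c * R ^ (2 - β)))) := by
    calc _ ≤ ∫⁻ y : E2, ∫⁻ z : E2, ‖phi t₁ R s y * phi t₂ R s z * ‖y - z‖ ^ (-β)‖ₑ :=
          (enorm_integral_le_lintegral_enorm _).trans
            (lintegral_mono fun y => enorm_integral_le_lintegral_enorm _)
      _ = ∫⁻ y : E2, ‖phi t₁ R s y‖ₑ * ∫⁻ z : E2, ‖phi t₂ R s z‖ₑ * ‖‖y - z‖ ^ (-β)‖ₑ := by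
          refine lintegral_congr fun y => ?_
          rw [← lintegral_const_mul' _ _ enorm_ne_top]
          simp_rw [enorm_mul, mul_assoc]
      _ ≤ ∫⁻ y : E2, ‖phi t₁ R s y‖ₑ * ENNReal.ofReal ((V / π * t₂) * (c * R ^ (2 - β))) := by
          gcongr with y
          exact hinner y
      _ ≤ _ := by
          rw [lintegral_mul_const' _ _ ENNReal.ofReal_ne_top,
            ENNReal.ofReal_mul (by positivity : 0 ≤ (V / π * t₁) * (R ^ 2 * V))]
          gcongr
  rw [Real.enorm_eq_ofReal_abs, ENNReal.ofReal_le_ofReal_iff (by positivity)] at hmain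
  have hpow : R ^ (β - 4) * (R ^ 2 * R ^ (2 - β)) = 1 := by
    rw [← Real.rpow_two, ← Real.rpow_add hR, ← Real.rpow_add hR,
      show β - 4 + (2 + (2 - β)) = 0 by ring, Real.rpow_zero]
  calc Psi β t₁ t₂ R s ≤ R ^ (β - 4) *
        (((V / π * t₁) * (R ^ 2 * V)) * ((V / π * t₂) * (c * R ^ (2 - β)))) := by
        unfold Psi
        gcongr
        exact (le_abs_self _).trans hmain
    _ = (R ^ (β - 4) * (R ^ 2 * R ^ (2 - β))) * ((V / π * t₁) * V * ((V / π * t₂) * c)) := by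
        ring
    _ = _ := by rw [hpow, one_mul]
end
end

section
/- For every β ∈ (0,2), (2π)² c_β κ_β = ∫_{B₁×B₁} ‖y−z‖^{−β} dy dz, where B₁ is the closed unit ball in ℝ²; in particular κ_β = ∫_{ℝ²} ‖ξ‖^{β−4} J₁(‖ξ‖)² dξ is finite. -/
/-!
The identity is Plancherel's formula for the Riesz kernel `‖x‖^{-β}` tested against the indicator of
the unit disc. The distributional Fourier transform of the kernel is avoided by writing both the
kernel and its transform as superpositions of Gaussians:

* `Γ(β/2) ‖x‖^{-β} = ∫₀^∞ t^{β/2-1} e^{-t‖x‖²} dt`;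
* for each `t > 0`, the Gaussian energy of the disc equals
  `(4πt)⁻¹ ∫ e^{-‖ξ‖²/(4t)} F(ξ)² dξ`, where `F` is the Fourier transform of the indicator of the
  disc (`gaussian_energy`);
* `∫₀^∞ t^{β/2-2} e^{-‖ξ‖²/(4t)} dt = Γ(1-β/2) (4/‖ξ‖²)^{1-β/2}`.

All integrands are nonnegative, so Tonelli combines the three into an identity in `[0, ∞]`
(`lintegral_riesz`). The transform is `F(ξ) = 2π J₁(‖ξ‖)/‖ξ‖` (`norm_mul_discFourier`), and the
energy of the disc is finite for `β < 2` (`integrable_riesz`), which yields the integrability of the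
integrand of `κ_β` as well as the identity in the real numbers.
-/

open MeasureTheory Real

noncomputable section

/-- The Bessel function of the first kind of order one:
`J₁(x) = (x/π) ∫₀^π sin²θ cos(x cos θ) dθ`. -/
def J1 (x : ℝ) : ℝ :=
  x / π * ∫ θ in (0:ℝ)..π, Real.sin θ ^ 2 * Real.cos (x * Real.cos θ)

/-- `c_β = Γ(1-β/2)/(π 4^{β/2} Γ(β/2))`. -/
def cBeta (β : ℝ) : ℝ :=
  Real.Gamma (1 - β / 2) / (π * (4 : ℝ) ^ (β / 2) * Real.Gamma (β / 2))

/-- `κ_β = ∫_{ℝ²} ‖ξ‖^{β-4} J₁(‖ξ‖)² dξ`. -/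
def kappaBeta (β : ℝ) : ℝ :=
  ∫ ξ : E2, ‖ξ‖ ^ (β - 4) * (J1 ‖ξ‖) ^ 2

open Set
open scoped ENNReal InnerProductSpace

/-! ### Gamma and Gaussian integrals -/

lemma lintegral_rpow_mul_exp {a r : ℝ} (ha : 0 < a) (hr : 0 < r) :
    ∫⁻ t in Ioi (0:ℝ), ENNReal.ofReal (t ^ (a - 1) * rexp (-(r * t))) =
      ENNReal.ofReal ((1 / r) ^ a * Gamma a) := by
  have h := Real.integral_rpow_mul_exp_neg_mul_Ioi ha hr
  have hpos : 0 < (1 / r) ^ a * Gamma a := by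
    have := Gamma_pos_of_pos ha
    positivity
  rw [← h, ofReal_integral_eq_lintegral_ofReal]
  · exact Integrable.of_integral_ne_zero (h ▸ hpos.ne')
  · filter_upwards [ae_restrict_mem measurableSet_Ioi] with t ht
    have : (0:ℝ) < t := ht
    simp only [Pi.zero_apply]
    positivity

/-- The Gamma integral after the substitution `t ↦ 1/t`. -/
lemma lintegral_rpow_mul_exp_div {a r : ℝ} (ha : a < 1) (hr : 0 < r) :
    ∫⁻ t in Ioi (0:ℝ), ENNReal.ofReal (t ^ (a - 2) * rexp (-(r / t))) =
      ENNReal.ofReal ((1 / r) ^ (1 - a) * Gamma (1 - a)) := by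
  have ha' : 0 < 1 - a := by linarith
  have h : ∫ t in Ioi (0:ℝ), t ^ (a - 2) * rexp (-(r / t)) = (1 / r) ^ (1 - a) * Gamma (1 - a) := by
    rw [← Real.integral_rpow_mul_exp_neg_mul_Ioi ha' hr,
      ← integral_comp_rpow_Ioi (fun t : ℝ => t ^ (1 - a - 1) * rexp (-(r * t))) (show (-1:ℝ) ≠ 0 by norm_num)]
    refine setIntegral_congr_fun measurableSet_Ioi fun t ht => ?_
    have ht : (0:ℝ) < t := ht
    simp only [smul_eq_mul]
    rw [← rpow_mul ht.le, rpow_neg_one, abs_neg, abs_one, one_mul, ← mul_assoc, ← rpow_add ht,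
      div_eq_mul_inv]
    congr 2
    ring
  have hpos : 0 < (1 / r) ^ (1 - a) * Gamma (1 - a) := by
    have := Gamma_pos_of_pos ha'
    positivity
  rw [← h, ofReal_integral_eq_lintegral_ofReal]
  · exact Integrable.of_integral_ne_zero (h ▸ hpos.ne')
  · filter_upwards [ae_restrict_mem measurableSet_Ioi] with t ht
    have : (0:ℝ) < t := ht
    simp only [Pi.zero_apply]
    positivity

/-- Fourier transform of a planar Gaussian, real part. -/
lemma integral_gaussian_cos {t : ℝ} (ht : 0 < t) (x : E2) :
    ∫ ξ : E2, rexp (-(‖ξ‖ ^ 2 / (4 * t))) * Real.cos ⟪x, ξ⟫_ℝ =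
      4 * π * t * rexp (-(t * ‖x‖ ^ 2)) := by
  have hb : 0 < ((1 / (4 * t) : ℝ) : ℂ).re := by
    rw [Complex.ofReal_re]; positivity
  have h := GaussianFourier.integral_cexp_neg_mul_sq_norm_add hb Complex.I x
  have hi := GaussianFourier.integrable_cexp_neg_mul_sq_norm_add hb Complex.I x
  have h2 := congrArg Complex.re h
  have h3 := integral_re hi
  simp only [RCLike.re_eq_complex_re] at h3
  rw [← h3] at h2
  convert h2 using 1
  · congr 1 with ξ
    have : (-((1 / (4 * t) : ℝ) : ℂ) * (‖ξ‖ : ℂ) ^ 2 + Complex.I * ((⟪x, ξ⟫_ℝ : ℝ) : ℂ)) =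
      ((-(‖ξ‖ ^ 2 / (4 * t)) : ℝ) : ℂ) + ((⟪x, ξ⟫_ℝ : ℝ) : ℂ) * Complex.I := by
      push_cast; ring
    rw [this, Complex.exp_add, ← Complex.ofReal_exp, Complex.re_ofReal_mul,
      Complex.exp_ofReal_mul_I_re]
  · have e1 : (Complex.I ^ 2 * (‖x‖ : ℂ) ^ 2 / (4 * ((1 / (4 * t) : ℝ) : ℂ))) =
        ((-(t * ‖x‖ ^ 2) : ℝ) : ℂ) := by
      have : (t : ℂ) ≠ 0 := by exact_mod_cast ht.ne'
      push_cast; rw [Complex.I_sq]; field_simp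
    have e2 : ((π : ℂ) / ((1 / (4 * t) : ℝ) : ℂ)) = ((4 * π * t : ℝ) : ℂ) := by
      have : (t : ℂ) ≠ 0 := by exact_mod_cast ht.ne'
      push_cast; field_simp
    rw [e1, e2]
    simp only [finrank_euclideanSpace, Fintype.card_fin, Nat.cast_ofNat, ne_eq, OfNat.ofNat_ne_zero,
      not_false_eq_true, div_self, Complex.cpow_one]
    rw [← Complex.ofReal_exp, ← Complex.ofReal_mul, Complex.ofReal_re]

/-! ### Gaussian energy of the disc -/

/-- Lebesgue measure restricted to the closed unit disc. -/
def discMeasure : Measure E2 := volume.restrict (Metric.closedBall (0 : E2) 1)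

instance : IsFiniteMeasure discMeasure :=
  ⟨by simp [discMeasure]⟩

/-- The Fourier transform `∫_{B₁} cos⟨x, ξ⟩ dx` of the indicator of the unit disc (which is real
because the disc is symmetric). -/
def discFourier (ξ : E2) : ℝ := ∫ x, Real.cos ⟪x, ξ⟫_ℝ ∂discMeasure

lemma integrable_gaussian {t : ℝ} (ht : 0 < t) :
    Integrable (fun ξ : E2 => rexp (-(‖ξ‖ ^ 2 / (4 * t)))) := by
  refine Integrable.of_integral_ne_zero ?_
  have := integral_gaussian_cos ht 0
  simp only [inner_zero_left, Real.cos_zero, mul_one] at this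
  rw [this]
  have := pi_pos
  positivity

lemma integral_sin_disc (ξ : E2) : ∫ x, Real.sin ⟪x, ξ⟫_ℝ ∂discMeasure = 0 := by
  have h : ∫ x, Real.sin ⟪-x, ξ⟫_ℝ ∂discMeasure = ∫ x, Real.sin ⟪x, ξ⟫_ℝ ∂discMeasure := by
    have hm : MeasurePreserving (Neg.neg : E2 → E2) discMeasure discMeasure := by
      have := (Measure.measurePreserving_neg (volume : Measure E2)).restrict_preimage
        (s := Metric.closedBall (0:E2) 1) Metric.isClosed_closedBall.measurableSet
      have hB : (Neg.neg : E2 → E2) ⁻¹' Metric.closedBall (0:E2) 1 = Metric.closedBall (0:E2) 1 := by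
        ext x; simp
      rw [hB] at this
      exact this
    exact hm.integral_comp (Homeomorph.neg E2).measurableEmbedding (fun x => Real.sin ⟪x, ξ⟫_ℝ)
  simp only [inner_neg_left, Real.sin_neg, integral_neg] at h
  linarith

lemma integral_disc_cos_sub (ξ : E2) :
    ∫ p, Real.cos ⟪p.1 - p.2, ξ⟫_ℝ ∂(discMeasure.prod discMeasure) = discFourier ξ ^ 2 := by
  have hc : Integrable (fun x : E2 => Real.cos ⟪x, ξ⟫_ℝ) discMeasure :=
    Integrable.of_bound (by fun_prop) 1 (by simp [Real.abs_cos_le_one])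
  have hs : Integrable (fun x : E2 => Real.sin ⟪x, ξ⟫_ℝ) discMeasure :=
    Integrable.of_bound (by fun_prop) 1 (by simp [Real.abs_sin_le_one])
  simp only [inner_sub_left, Real.cos_sub]
  rw [integral_add (hc.mul_prod hc) (hs.mul_prod hs),
    integral_prod_mul (fun x : E2 => Real.cos ⟪x, ξ⟫_ℝ) (fun x : E2 => Real.cos ⟪x, ξ⟫_ℝ),
    integral_prod_mul (fun x : E2 => Real.sin ⟪x, ξ⟫_ℝ) (fun x : E2 => Real.sin ⟪x, ξ⟫_ℝ),
    integral_sin_disc, discFourier]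
  ring

/-- Gaussian energy of the disc as an integral in frequency: the Gaussian is written as the Fourier
transform of a Gaussian, and Fubini applies because the disc has finite measure. -/
lemma gaussian_energy {t : ℝ} (ht : 0 < t) :
    4 * π * t * ∫ p, rexp (-(t * ‖p.1 - p.2‖ ^ 2)) ∂(discMeasure.prod discMeasure) =
      ∫ ξ : E2, rexp (-(‖ξ‖ ^ 2 / (4 * t))) * discFourier ξ ^ 2 := by
  rw [← integral_const_mul]
  simp_rw [← integral_gaussian_cos ht, ← integral_disc_cos_sub, ← integral_const_mul]
  refine integral_integral_swap ?_
  refine ((integrable_gaussian ht).comp_snd (discMeasure.prod discMeasure)).mono' ?_ ?_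
  · refine Continuous.aestronglyMeasurable ?_
    unfold Function.uncurry
    fun_prop
  · refine ae_of_all _ fun p => ?_
    simp only [Function.uncurry, norm_mul, Real.norm_eq_abs, abs_exp]
    exact mul_le_of_le_one_right (exp_pos _).le (abs_cos_le_one _)

/-! ### The transform of the disc and the Bessel function -/

/-- Length of the vertical chord of the disc at abscissa `u`; for `|u| > 1` the chord is empty and the
square root of a negative number is `0`. -/
lemma volume_real_chord (u : ℝ) : volume.real {v : ℝ | u ^ 2 + v ^ 2 ≤ 1} = 2 * √(1 - u ^ 2) := by
  have hset : ∀ h : 0 ≤ 1 - u ^ 2, {v : ℝ | u ^ 2 + v ^ 2 ≤ 1} = Icc (-√(1 - u ^ 2)) (√(1 - u ^ 2)) := by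
    intro h
    ext v
    rw [mem_ofPred_eq, mem_Icc, ← abs_le, Real.le_sqrt (abs_nonneg v) h, sq_abs]
    constructor <;> intro _ <;> linarith
  rcases le_or_gt 0 (1 - u ^ 2) with h | h
  · rw [hset h, Real.volume_real_Icc_of_le (by linarith [Real.sqrt_nonneg (1 - u ^ 2)])]
    ring
  · have : {v : ℝ | u ^ 2 + v ^ 2 ≤ 1} = ∅ := by
      ext v
      simp only [mem_ofPred_eq, mem_empty_iff_false, iff_false, not_le]
      nlinarith [sq_nonneg v]
    rw [this, Real.sqrt_eq_zero_of_nonpos h.le]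
    simp

lemma measurePreserving_coords :
    MeasurePreserving (fun x : E2 => ((x 0, x 1) : ℝ × ℝ)) volume volume :=
  (volume_preserving_finTwoArrow ℝ).comp (PiLp.volume_preserving_ofLp (Fin 2))

lemma measurableSet_disc : MeasurableSet {p : ℝ × ℝ | p.1 ^ 2 + p.2 ^ 2 ≤ 1} :=
  measurableSet_le (by fun_prop) (by fun_prop)

lemma integral_disc_coord (r : ℝ) :
    ∫ x, Real.cos (r * x 0) ∂discMeasure = ∫ u in (-1:ℝ)..1, 2 * √(1 - u ^ 2) * Real.cos (r * u) := by
  set D : Set (ℝ × ℝ) := {p | p.1 ^ 2 + p.2 ^ 2 ≤ 1} with hD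
  have hpre : (fun x : E2 => ((x 0, x 1) : ℝ × ℝ)) ⁻¹' D = Metric.closedBall (0 : E2) 1 := by
    ext x
    simp [hD, EuclideanSpace.norm_eq, Fin.sum_univ_two, Real.sqrt_le_one]
  have hm := measurePreserving_coords.restrict_preimage measurableSet_disc
  rw [← hD, hpre] at hm
  have hfin : volume D < ⊤ := by
    rw [← measurePreserving_coords.measure_preimage measurableSet_disc.nullMeasurableSet, ← hD, hpre]
    exact (isCompact_closedBall (0:E2) 1).measure_lt_top
  have h1 : ∫ x, Real.cos (r * x 0) ∂discMeasure = ∫ p in D, Real.cos (r * p.1) := by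
    rw [← hm.map_eq, integral_map hm.measurable.aemeasurable]
    · rfl
    · exact (by fun_prop : Continuous fun p : ℝ × ℝ => Real.cos (r * p.1)).aestronglyMeasurable
  rw [h1, ← integral_indicator measurableSet_disc, Measure.volume_eq_prod, integral_prod]
  · have h2 : ∀ u : ℝ, ∫ v, D.indicator (fun p : ℝ × ℝ => Real.cos (r * p.1)) (u, v) =
        2 * √(1 - u ^ 2) * Real.cos (r * u) := by
      intro u
      have : (fun v => D.indicator (fun p : ℝ × ℝ => Real.cos (r * p.1)) (u, v)) =
          {v : ℝ | u ^ 2 + v ^ 2 ≤ 1}.indicator (fun _ => Real.cos (r * u)) := by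
        ext v
        simp [Set.indicator, hD]
      rw [this, integral_indicator_const, volume_real_chord, smul_eq_mul]
      exact measurableSet_le (by fun_prop) (by fun_prop)
    simp_rw [← hD, h2]
    rw [intervalIntegral.integral_of_le (by norm_num), ← integral_Icc_eq_integral_Ioc,
      setIntegral_eq_integral_of_forall_compl_eq_zero]
    -- Outside `[-1, 1]` the integrand vanishes because the square root does.
    intro u hu
    have : 1 - u ^ 2 ≤ 0 := by
      by_contra! h
      exact hu (abs_le.1 (by rw [← sq_le_one_iff_abs_le_one]; linarith))
    rw [Real.sqrt_eq_zero_of_nonpos this]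
    simp
  · rw [← Measure.volume_eq_prod, integrable_indicator_iff measurableSet_disc]
    have : IsFiniteMeasure (volume.restrict D) := ⟨by simpa using hfin⟩
    exact Integrable.of_bound (by fun_prop) 1 (by simp [Real.abs_cos_le_one])

/-- Substitution `u = cos θ`. -/
lemma integral_chord_cos (r : ℝ) :
    ∫ u in (-1:ℝ)..1, 2 * √(1 - u ^ 2) * Real.cos (r * u) =
      2 * ∫ θ in (0:ℝ)..π, Real.sin θ ^ 2 * Real.cos (r * Real.cos θ) := by
  have h := intervalIntegral.integral_comp_mul_deriv (a := 0) (b := π) (f := Real.cos)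
    (f' := fun θ => -Real.sin θ) (g := fun u => 2 * √(1 - u ^ 2) * Real.cos (r * u))
    (fun θ _ => Real.hasDerivAt_cos θ) (by fun_prop) (by fun_prop)
  rw [Real.cos_zero, Real.cos_pi, intervalIntegral.integral_symm (-1) 1] at h
  rw [← neg_inj, ← h, ← intervalIntegral.integral_const_mul, ← intervalIntegral.integral_neg]
  refine intervalIntegral.integral_congr fun θ hθ => ?_
  rw [uIcc_of_le pi_pos.le] at hθ
  have hs : √(1 - Real.cos θ ^ 2) = Real.sin θ := by
    rw [← Real.sin_sq, Real.sqrt_sq (Real.sin_nonneg_of_mem_Icc hθ)]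
  simp only [Function.comp, hs]
  ring

lemma discFourier_isometry (R : E2 ≃ₗᵢ[ℝ] E2) (ξ : E2) : discFourier (R ξ) = discFourier ξ := by
  have hm := R.measurePreserving.restrict_preimage
    (s := Metric.closedBall (0:E2) 1) Metric.isClosed_closedBall.measurableSet
  have hB : R ⁻¹' Metric.closedBall (0:E2) 1 = Metric.closedBall (0:E2) 1 := by
    ext x; simp
  rw [hB] at hm
  have := MeasurePreserving.integral_comp hm R.toHomeomorph.measurableEmbedding
    (fun x => Real.cos ⟪x, R ξ⟫_ℝ)
  simp only [LinearIsometryEquiv.inner_map_map] at this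
  exact this.symm

/-- The Fourier transform of the disc is `2π J₁(‖ξ‖)/‖ξ‖`: a reflection moves `ξ` onto the first axis,
where slicing by chords gives the integral defining `J₁`. -/
lemma norm_mul_discFourier (ξ : E2) : ‖ξ‖ * discFourier ξ = 2 * π * J1 ‖ξ‖ := by
  set e : E2 := EuclideanSpace.single 0 ‖ξ‖ with he
  have hn : ‖ξ‖ = ‖e‖ := by simp [he]
  have h1 : discFourier ξ = discFourier e := by
    conv_rhs => rw [← Submodule.reflection_sub hn]
    exact (discFourier_isometry _ _).symm
  have h2 : discFourier e = ∫ x, Real.cos (‖ξ‖ * x 0) ∂discMeasure := by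
    simp [discFourier, he, EuclideanSpace.inner_single_right]
  rw [h1, h2, integral_disc_coord, integral_chord_cos, J1]
  field_simp

/-! ### Riesz energy of the disc -/

instance : NullSingletonClass discMeasure := by unfold discMeasure; infer_instance

lemma ae_ne_discMeasure : ∀ᵐ p ∂(discMeasure.prod discMeasure), p.1 ≠ p.2 := by
  have hm : MeasurableSet {p : E2 × E2 | p.1 ≠ p.2} :=
    (isClosed_eq continuous_fst continuous_snd).measurableSet.compl
  rw [Measure.ae_prod_iff_ae_ae hm]
  refine ae_of_all _ fun y => ?_
  have : ∀ᵐ z ∂discMeasure, z ≠ y := Measure.ae_ne _ _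
  filter_upwards [this] with z hz using hz.symm

/-- The radial density `r^{-β}` on `‖x‖ ≤ 2` is integrable in the plane, as `∫₀² r^{1-β} dr` converges
for `β < 2`. -/
lemma integrable_riesz_truncated {β : ℝ} (hβ2 : β < 2) :
    Integrable (fun x : E2 => (Iic (2:ℝ)).indicator (fun r => r ^ (-β)) ‖x‖) := by
  rw [integrable_fun_norm_addHaar volume (f := (Iic (2:ℝ)).indicator (fun r : ℝ => r ^ (-β)))]
  have h : IntegrableOn (fun r : ℝ => r ^ (1 - β)) (Ioc 0 2) := by
    rw [← intervalIntegrable_iff_integrableOn_Ioc_of_le (by norm_num)]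
    exact intervalIntegral.intervalIntegrable_rpow' (by linarith)
  rw [← integrable_indicator_iff measurableSet_Ioc] at h
  rw [← integrable_indicator_iff measurableSet_Ioi]
  convert h using 1
  ext r
  by_cases h0 : 0 < r <;> by_cases h2 : r ≤ 2 <;>
    simp [Set.indicator, h0, h2]
  rw [sub_eq_add_neg, rpow_add h0, rpow_one]

/-- The Riesz energy of the disc is finite: for `y, z ∈ B₁` the difference `y - z` lies in the ball of
radius `2`, so the inner integral is bounded by a constant independent of `y`. -/
lemma integrable_riesz {β : ℝ} (hβ2 : β < 2) :
    Integrable (fun p : E2 × E2 => ‖p.1 - p.2‖ ^ (-β)) (discMeasure.prod discMeasure) := by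
  have hmeas : Measurable (fun p : E2 × E2 => ‖p.1 - p.2‖ ^ (-β)) := by fun_prop
  refine ⟨hmeas.aestronglyMeasurable, ?_⟩
  rw [hasFiniteIntegral_iff_ofReal (ae_of_all _ fun p => by simp only [Pi.zero_apply]; positivity),
    lintegral_prod _ (by fun_prop)]
  set g : E2 → ℝ := fun x => (Iic (2:ℝ)).indicator (fun r => r ^ (-β)) ‖x‖ with hg
  have hgi : ∫⁻ x, ENNReal.ofReal (g x) < ⊤ := (integrable_riesz_truncated hβ2).lintegral_lt_top
  calc _ ≤ ∫⁻ _y, (∫⁻ x, ENNReal.ofReal (g x)) ∂discMeasure := by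
        unfold discMeasure
        refine setLIntegral_mono measurable_const fun y hy => ?_
        rw [← lintegral_sub_left_eq_self (fun x => ENNReal.ofReal (g x)) y]
        refine (setLIntegral_mono' Metric.isClosed_closedBall.measurableSet fun z hz => ?_).trans
          (setLIntegral_le_lintegral _ _)
        have : ‖y - z‖ ≤ 2 := by
          have h1 : ‖y‖ ≤ 1 := by simpa using hy
          have h2 : ‖z‖ ≤ 1 := by simpa using hz
          linarith [norm_sub_le y z]
        simp [hg, Set.indicator, this]
    _ < ⊤ := by
        rw [lintegral_const]
        exact ENNReal.mul_lt_top hgi (measure_lt_top _ _)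

lemma measurable_discFourier : Measurable discFourier := by
  have : StronglyMeasurable discFourier := by
    unfold discFourier
    refine StronglyMeasurable.integral_prod_right (f := fun (ξ x : E2) => Real.cos ⟪x, ξ⟫_ℝ) ?_
    exact Continuous.stronglyMeasurable (by unfold Function.uncurry; fun_prop)
  exact this.measurable

/-- `gaussian_energy` as an identity of extended nonnegative integrals, ready for Tonelli in `t`. -/
lemma lintegral_gaussian_energy {t : ℝ} (ht : 0 < t) :
    ∫⁻ p, ENNReal.ofReal (rexp (-(t * ‖p.1 - p.2‖ ^ 2))) ∂(discMeasure.prod discMeasure) =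
      ∫⁻ ξ : E2, ENNReal.ofReal ((4 * π * t)⁻¹ * rexp (-(‖ξ‖ ^ 2 / (4 * t))) * discFourier ξ ^ 2) := by
  have h0 : 4 * π * t ≠ 0 := by positivity
  have hF : ∀ ξ, |discFourier ξ| ≤ discMeasure.real univ := fun ξ => by
    have := norm_integral_le_of_norm_le_const (μ := discMeasure) (f := fun x => Real.cos ⟪x, ξ⟫_ℝ)
      (C := 1) (ae_of_all _ fun x => by simp [Real.abs_cos_le_one])
    simpa [discFourier] using this
  rw [← ofReal_integral_eq_lintegral_ofReal, ← ofReal_integral_eq_lintegral_ofReal]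
  · congr 1
    simp_rw [mul_assoc (4 * π * t)⁻¹]
    rw [integral_const_mul, ← gaussian_energy ht, inv_mul_cancel_left₀ h0]
  · refine ((integrable_gaussian ht).const_mul _).mul_bdd (c := discMeasure.real univ ^ 2)
      (measurable_discFourier.pow_const 2).aestronglyMeasurable (ae_of_all _ fun ξ => ?_)
    rw [norm_pow, Real.norm_eq_abs]
    exact pow_le_pow_left₀ (abs_nonneg _) (hF ξ) 2
  · exact ae_of_all _ fun ξ => by simp only [Pi.zero_apply]; positivity
  · refine Integrable.of_bound (Continuous.aestronglyMeasurable (by fun_prop)) 1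
      (ae_of_all _ fun p => ?_)
    rw [Real.norm_eq_abs, abs_exp, exp_le_one_iff, neg_nonpos]
    positivity
  · exact ae_of_all _ fun p => (exp_pos _).le

/-- The identity of the theorem in `[0, ∞]`, up to constants: `gaussian_energy` is integrated against
`t^{β/2-1} dt`, and Tonelli is used on both sides. No integrability is needed here; finiteness of the
right-hand side follows from that of the left. -/
lemma lintegral_riesz_s5 {β : ℝ} (hβ0 : 0 < β) (hβ2 : β < 2) :
    ENNReal.ofReal (Gamma (β / 2)) *
        ∫⁻ p, ENNReal.ofReal (‖p.1 - p.2‖ ^ (-β)) ∂(discMeasure.prod discMeasure) =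
      ∫⁻ ξ : E2, ENNReal.ofReal
        (4 * π * Gamma (1 - β / 2) * 4 ^ (-(β / 2)) * (‖ξ‖ ^ (β - 4) * J1 ‖ξ‖ ^ 2)) := by
  have hΓ := Gamma_pos_of_pos (show 0 < β / 2 by linarith)
  have hΓ' := Gamma_pos_of_pos (show 0 < 1 - β / 2 by linarith)
  have hF := measurable_discFourier
  calc _ = ∫⁻ p, (∫⁻ t in Ioi (0:ℝ), ENNReal.ofReal (t ^ (β / 2 - 1)) *
            ENNReal.ofReal (rexp (-(t * ‖p.1 - p.2‖ ^ 2)))) ∂(discMeasure.prod discMeasure) := by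
        rw [← lintegral_const_mul _ (by fun_prop)]
        refine lintegral_congr_ae ?_
        filter_upwards [ae_ne_discMeasure] with p hp
        -- `Γ(β/2) ‖x‖^{-β} = ∫₀^∞ t^{β/2-1} e^{-t‖x‖²} dt`, valid off the diagonal.
        have hn : 0 < ‖p.1 - p.2‖ := norm_pos_iff.2 (sub_ne_zero.2 hp)
        have h := lintegral_rpow_mul_exp (show 0 < β / 2 by linarith)
          (show 0 < ‖p.1 - p.2‖ ^ 2 by positivity)
        have e : (1 / ‖p.1 - p.2‖ ^ 2) ^ (β / 2) = ‖p.1 - p.2‖ ^ (-β) := by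
          rw [one_div, inv_rpow (by positivity), ← rpow_natCast, ← rpow_mul hn.le, rpow_neg hn.le]
          congr 2
          push_cast; ring
        rw [e] at h
        rw [← ENNReal.ofReal_mul hΓ.le, mul_comm, ← h]
        refine setLIntegral_congr_fun measurableSet_Ioi fun t ht => ?_
        rw [← ENNReal.ofReal_mul (rpow_nonneg (le_of_lt ht) _), mul_comm t]
    _ = ∫⁻ t in Ioi (0:ℝ), ENNReal.ofReal (t ^ (β / 2 - 1)) *
          ∫⁻ p, ENNReal.ofReal (rexp (-(t * ‖p.1 - p.2‖ ^ 2))) ∂(discMeasure.prod discMeasure) := by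
        rw [lintegral_lintegral_swap (by unfold Function.uncurry; fun_prop)]
        refine lintegral_congr fun t => ?_
        rw [lintegral_const_mul _ (by fun_prop)]
    _ = ∫⁻ t in Ioi (0:ℝ), ∫⁻ ξ : E2, ENNReal.ofReal ((4 * π)⁻¹ * discFourier ξ ^ 2) *
          ENNReal.ofReal (t ^ (β / 2 - 2) * rexp (-(‖ξ‖ ^ 2 / 4 / t))) := by
        refine setLIntegral_congr_fun measurableSet_Ioi fun t ht => ?_
        have ht : 0 < t := ht
        rw [lintegral_gaussian_energy ht, ← lintegral_const_mul _ (by fun_prop)]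
        refine lintegral_congr fun ξ => ?_
        rw [← ENNReal.ofReal_mul (by positivity), ← ENNReal.ofReal_mul (by positivity)]
        congr 1
        rw [show β / 2 - 1 = (β / 2 - 2) + 1 by ring, rpow_add ht, rpow_one, div_div]
        field_simp
    _ = ∫⁻ ξ : E2, ENNReal.ofReal ((4 * π)⁻¹ * discFourier ξ ^ 2) *
          ∫⁻ t in Ioi (0:ℝ), ENNReal.ofReal (t ^ (β / 2 - 2) * rexp (-(‖ξ‖ ^ 2 / 4 / t))) := by
        rw [lintegral_lintegral_swap (by unfold Function.uncurry; fun_prop)]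
        refine lintegral_congr fun ξ => ?_
        rw [lintegral_const_mul _ (by fun_prop)]
    _ = _ := by
        refine lintegral_congr_ae ?_
        filter_upwards [Measure.ae_ne volume (0 : E2)] with ξ hξ
        have hn : 0 < ‖ξ‖ := norm_pos_iff.2 hξ
        rw [lintegral_rpow_mul_exp_div (show β / 2 < 1 by linarith) (by positivity),
          ← ENNReal.ofReal_mul (by positivity)]
        congr 1
        have hJ : discFourier ξ = 2 * π * J1 ‖ξ‖ / ‖ξ‖ := by
          rw [← norm_mul_discFourier]; field_simp
        have e1 : (1 / (‖ξ‖ ^ 2 / 4)) ^ (1 - β / 2) = 4 * 4 ^ (-(β / 2)) * ‖ξ‖ ^ (β - 2) := by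
          rw [one_div_div, div_rpow (by norm_num) (by positivity), sub_eq_add_neg,
            rpow_add (by norm_num), rpow_one, ← rpow_natCast, ← rpow_mul hn.le, div_eq_mul_inv,
            ← rpow_neg hn.le]
          congr 2
          push_cast; ring
        have e2 : ‖ξ‖ ^ (β - 2) = ‖ξ‖ ^ (β - 4) * ‖ξ‖ ^ 2 := by
          rw [← rpow_natCast, ← rpow_add hn]
          congr 1
          push_cast; ring
        rw [hJ, e1, e2]
        field_simp
        ring

/-! ### The identity in real numbers -/

/-- For `β ∈ (0,2)`: `(2π)² c_β κ_β = ∫_{B₁×B₁} ‖y-z‖^{-β} dy dz`; in particular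
the integral defining `κ_β` is finite (the integrand is integrable). -/
theorem stmt_5 (β : ℝ) (hβ0 : 0 < β) (hβ2 : β < 2) :
    Integrable (fun ξ : E2 => ‖ξ‖ ^ (β - 4) * (J1 ‖ξ‖) ^ 2) ∧
    (2 * π) ^ 2 * cBeta β * kappaBeta β =
      ∫ y in Metric.closedBall (0 : E2) 1,
        ∫ z in Metric.closedBall (0 : E2) 1, ‖y - z‖ ^ (-β) := by
  have hΓ := Gamma_pos_of_pos (show 0 < β / 2 by linarith)
  have hΓ' := Gamma_pos_of_pos (show 0 < 1 - β / 2 by linarith)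
  have hR := integrable_riesz hβ2
  have hnn : 0 ≤ᵐ[discMeasure.prod discMeasure] fun p : E2 × E2 => ‖p.1 - p.2‖ ^ (-β) :=
    ae_of_all _ fun p => by simp only [Pi.zero_apply]; positivity
  set C : ℝ := 4 * π * Gamma (1 - β / 2) * 4 ^ (-(β / 2)) with hC
  have hCpos : 0 < C := by positivity
  set f : E2 → ℝ := fun ξ => ‖ξ‖ ^ (β - 4) * (J1 ‖ξ‖) ^ 2 with hf
  have hfnn : ∀ ξ, 0 ≤ f ξ := fun ξ => by simp only [hf]; positivity
  have key := lintegral_riesz_s5 hβ0 hβ2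
  rw [← ofReal_integral_eq_lintegral_ofReal hR hnn, ← ENNReal.ofReal_mul hΓ.le] at key
  have hfm : Measurable f := by
    -- `J₁(‖ξ‖)` inherits measurability from the disc transform.
    have hJ : Measurable fun ξ : E2 => J1 ‖ξ‖ := by
      have : (fun ξ : E2 => J1 ‖ξ‖) = fun ξ => ‖ξ‖ * discFourier ξ / (2 * π) := by
        ext ξ
        rw [norm_mul_discFourier]; field_simp
      rw [this]
      have := measurable_discFourier
      fun_prop
    fun_prop
  have hCf : Integrable (fun ξ => C * f ξ) := by
    refine ⟨(hfm.const_mul C).aestronglyMeasurable, ?_⟩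
    rw [hasFiniteIntegral_iff_ofReal (ae_of_all _ fun ξ => mul_nonneg hCpos.le (hfnn ξ)), ← key]
    exact ENNReal.ofReal_lt_top
  have hfi : Integrable f := by
    have := hCf.const_mul C⁻¹
    simpa only [inv_mul_cancel_left₀ hCpos.ne'] using this
  refine ⟨hfi, ?_⟩
  rw [← ofReal_integral_eq_lintegral_ofReal hCf
    (ae_of_all _ fun ξ => mul_nonneg hCpos.le (hfnn ξ)), integral_const_mul,
    ENNReal.ofReal_eq_ofReal_iff (mul_nonneg hΓ.le (integral_nonneg_of_ae hnn))
    (mul_nonneg hCpos.le (integral_nonneg hfnn)), integral_prod _ hR] at key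
  change _ = ∫ y, ∫ z, ‖y - z‖ ^ (-β) ∂discMeasure ∂discMeasure
  rw [← mul_right_inj' hΓ.ne', key, kappaBeta, cBeta, hC, rpow_neg (by norm_num)]
  field_simp
  ring
end
end

section
/- Let q ∈ (1/2,1), δ ∈ [1, 1/q] and 0 ≤ s < t < ∞. There is a constant C depending only on q such that for every z ∈ ℝ² with ‖z‖ > 0, ∫_s^t [ (G_{t−r}^{2q} ∗ G_{r−s}^{2q})(z) ]^{δ} dr ≤ C (t−s)^{1−δ(2q−1)} G_{t−s}(z)^{δ(2q−1)}, where (G_{t−r}^{2q} ∗ G_{r−s}^{2q})(z) = ∫_{ℝ²} G_{t−r}(x)^{2q} G_{r−s}(z−x)^{2q} dx. -/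
/-!
Write `T = t - s`, `w = ‖z‖`, `a = t - r`, `b = r - s`. If `w ≥ T`, the discs of radii `a` around `0`
and `b` around `z` are disjoint and both sides vanish, so let `w < T`, and put `e = T - w`,
`L = (T + w) / 2`, so that `2eL = T² - w²`.

On a line orthogonal to `z` the two discs cut out chords of half-lengths `P` and `Q`, and the integral
of the convolution integrand along it is at most `C (PQ)^(-q) |P - Q|^(1-2q)`
(`lintegral_crossSection_le`). If `x₁` is the coordinate along `z`, the variables `h = a - x₁` and
`y = a - h / 2` range over `(0, e)` and `(0, L)`, with `P² = 2hy` and `Q² = 2(e - h)(L - y)`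
(`lintegral_conv_le`).

For `δ = 1/q`, Jensen's inequality in `h` and Tonelli bound the integral over `r` by `e^(1/q - 1)`
times the double integral over `h` and `y` of `(PQ)⁻¹ |P - Q|^(-(2 - 1/q))`. The substitution
`h = e sin² ψ`, `y = L sin² φ` turns `P - Q` into `-√(2eL) cos (ψ + φ)` and cancels the factor
`(PQ)⁻¹`, so the double integral is a constant times `(T² - w²)^(-(2 - 1/q)/2)`; it is finite since
`2 - 1/q < 1` (`lintegral_kernel_rpow_le`, `lintegral_slice_rpow_le`). This is the claim for
`δ = 1/q`, and Jensen's inequality in `r` gives the smaller exponents `δ`.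
-/

open MeasureTheory Real

noncomputable section

/-! ### One-dimensional integrals -/

/-- The bound comes from splitting at `v = d`, where `v + d` is replaced by `d` below and by `v`
above; `q < 1` gives integrability at `0` and `2q > 1` at infinity. -/
lemma lintegral_halfLine_le (q : ℝ) (h1 : 1/2 < q) (h2 : q < 1) (d : ℝ) (hd : 0 < d) :
    ∫⁻ v in Set.Ioi (0:ℝ), ENNReal.ofReal (v ^ (-q) * (v + d) ^ (-q)) ≤
      ENNReal.ofReal (1 / (1 - q) + 1 / (2 * q - 1)) * ENNReal.ofReal d ^ (1 - 2 * q) := by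
  have hU : Set.Ioi (0:ℝ) = Set.Ioc 0 d ∪ Set.Ioi d := (Set.Ioc_union_Ioi_eq_Ioi hd.le).symm
  have near : ∫⁻ v in Set.Ioc (0:ℝ) d, ENNReal.ofReal (v ^ (-q) * (v + d) ^ (-q)) ≤
      ENNReal.ofReal (1 / (1 - q) * d ^ (1 - 2 * q)) := by
    have hint : IntegrableOn (fun v : ℝ => v ^ (-q) * d ^ (-q)) (Set.Ioc 0 d) := by
      apply Integrable.mul_const
      exact (intervalIntegrable_iff_integrableOn_Ioc_of_le hd.le).1
        (intervalIntegral.intervalIntegrable_rpow' (by linarith))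
    calc _ ≤ ∫⁻ v in Set.Ioc (0:ℝ) d, ENNReal.ofReal (v ^ (-q) * d ^ (-q)) := by
          refine setLIntegral_mono' measurableSet_Ioc fun v hv => ?_
          apply ENNReal.ofReal_le_ofReal
          have := hv.1
          gcongr ?_ * ?_
          exact rpow_le_rpow_of_nonpos hd (by linarith) (by linarith)
      _ = _ := by
          rw [← ofReal_integral_eq_lintegral_ofReal hint]
          · congr 1
            rw [← intervalIntegral.integral_of_le hd.le, intervalIntegral.integral_mul_const,
              integral_rpow (Or.inl (by linarith)), zero_rpow (by linarith), sub_zero,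
              div_mul_eq_mul_div, ← rpow_add hd]
            rw [show -q + 1 + -q = 1 - 2 * q by ring, show -q + 1 = 1 - q by ring]
            ring
          · refine (ae_restrict_iff' measurableSet_Ioc).2 (.of_forall fun v hv => ?_)
            have := hv.1
            simp only [Pi.zero_apply]
            positivity
  have far : ∫⁻ v in Set.Ioi d, ENNReal.ofReal (v ^ (-q) * (v + d) ^ (-q)) ≤
      ENNReal.ofReal (1 / (2 * q - 1) * d ^ (1 - 2 * q)) := by
    calc _ ≤ ∫⁻ v in Set.Ioi d, ENNReal.ofReal (v ^ (-(2 * q))) := by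
          refine setLIntegral_mono' measurableSet_Ioi fun v hv => ?_
          apply ENNReal.ofReal_le_ofReal
          have hv : d < v := hv
          have h0 : 0 < v := by linarith
          rw [show -(2 * q) = -q + -q by ring, rpow_add h0]
          gcongr ?_ * ?_
          exact rpow_le_rpow_of_nonpos h0 (by linarith) (by linarith)
      _ = _ := by
          rw [← ofReal_integral_eq_lintegral_ofReal
            (integrableOn_Ioi_rpow_of_lt (by linarith) hd)]
          · congr 1
            rw [integral_Ioi_rpow_of_lt (by linarith) hd,
              show -(2 * q) + 1 = 1 - 2 * q by ring, show 1 - 2 * q = -(2 * q - 1) by ring, div_neg]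
            ring
          · refine (ae_restrict_iff' measurableSet_Ioi).2 (.of_forall fun v hv => ?_)
            have hv : d < v := hv
            have h0 : 0 < v := by linarith
            simp only [Pi.zero_apply]
            positivity
  calc _ ≤ _ := by rw [hU]
      _ ≤ _ := lintegral_union_le _ _ _
      _ ≤ _ := add_le_add near far
      _ = _ := by
        have : 0 < 1 - q := by linarith
        have : 0 < 2 * q - 1 := by linarith
        rw [ENNReal.ofReal_rpow_of_pos hd, ← ENNReal.ofReal_mul (by positivity), add_mul,
          ENNReal.ofReal_add (by positivity) (by positivity)]

/-- The integral of the convolution integrand along a line orthogonal to `z`, where `P` and `Q` are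
the half-lengths of the chords cut out by the two discs. For `y ≥ 0` one has
`P² - y² ≥ P (P - y)`, and the same for `Q`, which reduces the claim to `lintegral_halfLine_le` with
`d = |P - Q|`. For `P = Q` the right-hand side is `∞`. -/
lemma lintegral_crossSection_le (q : ℝ) (h1 : 1/2 < q) (h2 : q < 1) (P Q : ℝ) (hP : 0 < P) (hQ : 0 < Q) :
    ∫⁻ y : ℝ, (if y ^ 2 < P ^ 2 ∧ y ^ 2 < Q ^ 2 then
      ENNReal.ofReal ((P ^ 2 - y ^ 2) ^ (-q) * (Q ^ 2 - y ^ 2) ^ (-q)) else 0) ≤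
      ENNReal.ofReal (2 * (1 / (1 - q) + 1 / (2 * q - 1))) *
        (ENNReal.ofReal (P * Q) ^ (-q) * ENNReal.ofReal |P - Q| ^ (1 - 2 * q)) := by
  have p1 : 0 < 1 - q := by linarith
  have p2 : 0 < 2 * q - 1 := by linarith
  wlog hPQ : P ≤ Q generalizing P Q
  · have := this Q P hQ hP (le_of_not_ge hPQ)
    rw [mul_comm Q P, abs_sub_comm] at this
    refine le_trans (le_of_eq ?_) this
    refine lintegral_congr fun y => ?_
    simp only [mul_comm, and_comm]
  rcases hPQ.eq_or_lt with rfl | hlt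
  · rw [sub_self, abs_zero, ENNReal.ofReal_zero, ENNReal.zero_rpow_of_neg (by linarith),
      ENNReal.mul_top, ENNReal.mul_top]
    · exact le_top
    · positivity
    · rw [ENNReal.ofReal_rpow_of_pos (by positivity)]
      positivity
  set H : ℝ → ENNReal := (Set.Ioi (0:ℝ)).indicator
    (fun v => ENNReal.ofReal (v ^ (-q) * (v + (Q - P)) ^ (-q))) with hH
  have hHm : Measurable H := by
    apply Measurable.indicator _ measurableSet_Ioi
    fun_prop
  have key : ∀ y : ℝ, (if y ^ 2 < P ^ 2 ∧ y ^ 2 < Q ^ 2 then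
      ENNReal.ofReal ((P ^ 2 - y ^ 2) ^ (-q) * (Q ^ 2 - y ^ 2) ^ (-q)) else 0) ≤
      ENNReal.ofReal (P * Q) ^ (-q) * (H (P - y) + H (P + y)) := by
    intro y
    split_ifs with h
    · have hy : |y| < P := abs_lt_of_sq_lt_sq h.1 hP.le
      have hb : ENNReal.ofReal ((P ^ 2 - y ^ 2) ^ (-q) * (Q ^ 2 - y ^ 2) ^ (-q)) ≤
          ENNReal.ofReal (P * Q) ^ (-q) * H (P - |y|) := by
        have h0 : 0 < P - |y| := by linarith
        have h0' : 0 < Q - |y| := by linarith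
        rw [hH, Set.indicator_of_mem (by exact h0), ENNReal.ofReal_rpow_of_pos (by positivity),
          ← ENNReal.ofReal_mul (by positivity)]
        apply ENNReal.ofReal_le_ofReal
        rw [show P - |y| + (Q - P) = Q - |y| by ring, mul_rpow hP.le hQ.le,
          show P ^ (-q) * Q ^ (-q) * ((P - |y|) ^ (-q) * (Q - |y|) ^ (-q)) =
            (P ^ (-q) * (P - |y|) ^ (-q)) * (Q ^ (-q) * (Q - |y|) ^ (-q)) by ring,
          ← mul_rpow hP.le h0.le, ← mul_rpow hQ.le h0'.le]
        have e : y ^ 2 = |y| ^ 2 := (sq_abs y).symm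
        have hy0 := abs_nonneg y
        rw [e]
        have i1 : P * (P - |y|) ≤ P ^ 2 - |y| ^ 2 := by nlinarith
        have i2 : Q * (Q - |y|) ≤ Q ^ 2 - |y| ^ 2 := by nlinarith
        have i0 : 0 < P * (P - |y|) := by positivity
        have i0' : 0 < Q * (Q - |y|) := by positivity
        have j1 := rpow_le_rpow_of_nonpos i0 i1 (show -q ≤ 0 by linarith)
        have j2 := rpow_le_rpow_of_nonpos i0' i2 (show -q ≤ 0 by linarith)
        have : 0 ≤ Q ^ 2 - |y| ^ 2 := by linarith
        gcongr
      refine hb.trans ?_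
      gcongr
      rcases abs_cases y with ⟨e, _⟩ | ⟨e, _⟩ <;> rw [e]
      · exact le_self_add
      · rw [sub_neg_eq_add]; exact le_add_self
    · exact bot_le
  calc _ ≤ _ := lintegral_mono key
    _ = ENNReal.ofReal (P * Q) ^ (-q) * (2 * ∫⁻ v, H v) := by
      rw [lintegral_const_mul _ (by fun_prop), lintegral_add_left (by fun_prop),
        lintegral_sub_left_eq_self, lintegral_add_left_eq_self, two_mul]
    _ ≤ ENNReal.ofReal (P * Q) ^ (-q) * (2 * (ENNReal.ofReal (1 / (1 - q) + 1 / (2 * q - 1)) *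
        ENNReal.ofReal (Q - P) ^ (1 - 2 * q))) := by
      gcongr
      rw [hH, lintegral_indicator measurableSet_Ioi]
      exact lintegral_halfLine_le q h1 h2 _ (by linarith)
    _ = _ := by
      rw [ENNReal.ofReal_mul (p := 2) (by norm_num), abs_sub_comm,
        abs_of_pos (by linarith : 0 < Q - P), ENNReal.ofReal_ofNat]
      ring

/-- The substitution `h = e sin² ψ`, under which `dh / √(h (e - h)) = 2 dψ`. -/
lemma lintegral_sin_sq_subst (e : ℝ) (he : 0 < e) (f : ℝ → ENNReal) :
    ∫⁻ h in Set.Ioo 0 e, ENNReal.ofReal (h * (e - h)) ^ (-(1/2) : ℝ) * f h =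
      2 * ∫⁻ ψ in Set.Ioo 0 (π / 2), f (e * sin ψ ^ 2) := by
  have himg : (fun ψ => e * sin ψ ^ 2) '' Set.Ioo 0 (π / 2) = Set.Ioo 0 e := by
    ext h
    constructor
    · rintro ⟨ψ, hψ, rfl⟩
      have s0 : 0 < sin ψ := sin_pos_of_pos_of_lt_pi hψ.1 (by linarith [hψ.2, pi_pos])
      have c0 : 0 < cos ψ := cos_pos_of_mem_Ioo ⟨by linarith [hψ.1, pi_pos], hψ.2⟩
      have := sin_sq_add_cos_sq ψ
      constructor
      · positivity
      · show e * sin ψ ^ 2 < e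
        have : sin ψ ^ 2 < 1 := by nlinarith
        nlinarith
    · rintro ⟨a, b⟩
      have h0 : 0 < h / e := by positivity
      have h1 : h / e < 1 := (div_lt_one he).2 b
      have h2 : √(h / e) < 1 := by rw [sqrt_lt' one_pos]; simpa using h1
      refine ⟨arcsin √(h / e), ⟨arcsin_pos.2 (sqrt_pos.2 h0), arcsin_lt_pi_div_two.2 h2⟩, ?_⟩
      show e * sin (arcsin √(h / e)) ^ 2 = h
      rw [sin_arcsin (by linarith [sqrt_nonneg (h / e)]) h2.le, sq_sqrt h0.le]
      field_simp
  have hder : ∀ ψ ∈ Set.Ioo 0 (π / 2), HasDerivWithinAt (fun ψ => e * sin ψ ^ 2)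
      (2 * e * sin ψ * cos ψ) (Set.Ioo 0 (π / 2)) ψ := by
    intro ψ _
    have := (((hasDerivAt_sin ψ).pow 2).const_mul e).hasDerivWithinAt (s := Set.Ioo 0 (π / 2))
    refine this.congr_deriv ?_
    simp; ring
  have hinj : Set.InjOn (fun ψ => e * sin ψ ^ 2) (Set.Ioo 0 (π / 2)) := by
    intro x hx y hy hxy
    have hp := pi_pos
    have sx : 0 < sin x := sin_pos_of_pos_of_lt_pi hx.1 (by linarith [hx.2])
    have sy : 0 < sin y := sin_pos_of_pos_of_lt_pi hy.1 (by linarith [hy.2])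
    have h2 : sin x ^ 2 = sin y ^ 2 := mul_left_cancel₀ he.ne' hxy
    exact injOn_sin ⟨by linarith [hx.1], by linarith [hx.2]⟩ ⟨by linarith [hy.1], by linarith [hy.2]⟩
      ((sq_eq_sq₀ sx.le sy.le).1 h2)
  have := lintegral_image_eq_lintegral_abs_deriv_mul measurableSet_Ioo hder hinj
    (fun h => ENNReal.ofReal (h * (e - h)) ^ (-(1/2) : ℝ) * f h)
  rw [himg] at this
  rw [this, ← lintegral_const_mul' _ _ (by norm_num)]
  refine setLIntegral_congr_fun measurableSet_Ioo fun ψ hψ => ?_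
  have s0 : 0 < sin ψ := sin_pos_of_pos_of_lt_pi hψ.1 (by linarith [hψ.2, pi_pos])
  have c0 : 0 < cos ψ := cos_pos_of_mem_Ioo ⟨by linarith [hψ.1, pi_pos], hψ.2⟩
  have e1 : e * sin ψ ^ 2 * (e - e * sin ψ ^ 2) = (e * sin ψ * cos ψ) ^ 2 := by
    have := cos_sq' ψ
    rw [mul_pow, this]; ring
  have pos : 0 < e * sin ψ * cos ψ := by positivity
  rw [e1, ENNReal.ofReal_rpow_of_pos (by positivity), ← mul_assoc, ← ENNReal.ofReal_mul (by positivity),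
    abs_of_pos (by positivity)]
  congr 1
  rw [← ENNReal.ofReal_ofNat 2]
  congr 1
  rw [← rpow_natCast, ← rpow_mul pos.le]
  norm_num
  rw [rpow_neg_one]
  field_simp

lemma lintegral_abs_cos_rpow_lt_top (a : ℝ) (ha : 0 < a) (ha1 : a < 1) :
    ∫⁻ θ in Set.Ioo 0 π, ENNReal.ofReal |cos θ| ^ (-a) < ⊤ := by
  have hp := pi_pos
  set g : ℝ → ENNReal := (Set.Ioc (0:ℝ) (π / 2)).indicator
    (fun u => ENNReal.ofReal (u ^ (-a) * (2 / π) ^ (-a))) with hg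
  have hgm : Measurable g := by
    apply Measurable.indicator _ measurableSet_Ioc
    fun_prop
  have hgi : ∫⁻ u, g u < ⊤ := by
    rw [hg, lintegral_indicator measurableSet_Ioc]
    apply Integrable.lintegral_lt_top
    apply Integrable.mul_const
    exact (intervalIntegrable_iff_integrableOn_Ioc_of_le (by positivity)).1
        (intervalIntegral.intervalIntegrable_rpow' (by linarith))
  -- At `θ = π / 2` the integrand is `∞` while `g 0 = 0`.
  have hne : ∀ᵐ θ : ℝ, θ ≠ π / 2 := by simp [ae_iff]
  calc _ ≤ ∫⁻ θ in Set.Ioo 0 π, (g (π / 2 - θ) + g (θ - π / 2)) := by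
        apply setLIntegral_mono_ae' measurableSet_Ioo
        filter_upwards [hne] with θ hθ hm
        have h0 : 0 < |π / 2 - θ| := abs_pos.2 (sub_ne_zero.2 hθ.symm)
        have h1 : |π / 2 - θ| ≤ π / 2 := by
          rw [abs_le]; constructor <;> linarith [hm.1, hm.2]
        have hb : ENNReal.ofReal |cos θ| ^ (-a) ≤ g |π / 2 - θ| := by
          have h2 := mul_abs_le_abs_sin h1
          rw [sin_pi_div_two_sub] at h2
          have h3 : 0 < 2 / π * |π / 2 - θ| := by positivity
          rw [hg, Set.indicator_of_mem (Set.mem_Ioc.2 ⟨h0, h1⟩), ENNReal.ofReal_rpow_of_pos (by linarith)]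
          apply ENNReal.ofReal_le_ofReal
          rw [mul_comm, ← mul_rpow (by positivity) h0.le]
          exact rpow_le_rpow_of_nonpos h3 h2 (by linarith)
        refine hb.trans ?_
        rcases abs_cases (π / 2 - θ) with ⟨e, _⟩ | ⟨e, _⟩ <;> rw [e]
        · exact le_self_add
        · rw [neg_sub]; exact le_add_self
    _ ≤ ∫⁻ θ, (g (π / 2 - θ) + g (θ - π / 2)) := setLIntegral_le_lintegral _ _
    _ = (∫⁻ u, g u) + ∫⁻ u, g u := by
        rw [lintegral_add_left (by fun_prop), lintegral_sub_left_eq_self,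
          lintegral_sub_right_eq_self]
    _ < ⊤ := ENNReal.add_lt_top.2 ⟨hgi, hgi⟩

/-! ### The kernel in adapted coordinates -/

/-- The bound of `lintegral_crossSection_le`, without its constant, for the chords with
`P² = 2hy` and `Q² = 2(e - h)(L - y)`. It equals `∞` where `P = Q`. -/
def sliceKernel (q e L h y : ℝ) : ENNReal :=
  ENNReal.ofReal (√(2 * h * y) * √(2 * (e - h) * (L - y))) ^ (-q) *
    ENNReal.ofReal |√(2 * h * y) - √(2 * (e - h) * (L - y))| ^ (1 - 2 * q)

lemma sliceKernel_measurable (q e L : ℝ) : Measurable fun p : ℝ × ℝ => sliceKernel q e L p.1 p.2 := by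
  unfold sliceKernel
  fun_prop

lemma sliceKernel_rpow_le (q : ℝ) (h1 : 1/2 < q) (e L h y : ℝ) (hh : h ∈ Set.Ioo 0 e) (hy : y ∈ Set.Ioo 0 L) :
    sliceKernel q e L h y ^ (1 / q) ≤ ENNReal.ofReal (h * (e - h)) ^ (-(1/2) : ℝ) *
      (ENNReal.ofReal (y * (L - y)) ^ (-(1/2) : ℝ) *
        ENNReal.ofReal |√(2 * h * y) - √(2 * (e - h) * (L - y))| ^ (-(2 - 1 / q))) := by
  have q0 : 0 < q := by linarith
  have i1 := hh.1
  have i2 : 0 < e - h := sub_pos.2 hh.2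
  have i3 := hy.1
  have i4 : 0 < L - y := sub_pos.2 hy.2
  unfold sliceKernel
  rw [ENNReal.mul_rpow_of_nonneg _ _ (by positivity), ← ENNReal.rpow_mul, ← ENNReal.rpow_mul,
    ← mul_assoc]
  have e1 : -q * (1 / q) = -1 := by field_simp
  have e2 : (1 - 2 * q) * (1 / q) = -(2 - 1 / q) := by field_simp; ring
  rw [e1, e2]
  gcongr
  rw [ENNReal.ofReal_rpow_of_pos (by positivity), ENNReal.ofReal_rpow_of_pos (by positivity),
    ENNReal.ofReal_rpow_of_pos (by positivity), ← ENNReal.ofReal_mul (by positivity)]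
  apply ENNReal.ofReal_le_ofReal
  rw [← mul_rpow (by positivity) (by positivity), rpow_neg_one, rpow_neg (by positivity),
    ← sqrt_eq_rpow, ← sqrt_mul (by positivity)]
  refine inv_anti₀ (by positivity) (sqrt_le_sqrt ?_)
  nlinarith [show 0 < h * (e - h) * (y * (L - y)) by positivity]

/-- With `h = e sin² ψ` and `y = L sin² φ` the difference of the chord half-lengths is
`-√(2eL) cos (ψ + φ)`, and the remaining factors of the kernel cancel the Jacobian. What is left is
the integral of `|cos|` to the power `-(2 - 1/q) > -1`. -/
lemma lintegral_kernel_rpow_le (q : ℝ) (h1 : 1/2 < q) (h2 : q < 1) : ∃ M : ENNReal, M < ⊤ ∧ ∀ e L : ℝ, 0 < e → 0 < L →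
    ∫⁻ h in Set.Ioo 0 e, ∫⁻ y in Set.Ioo 0 L, sliceKernel q e L h y ^ (1 / q) ≤
      M * ENNReal.ofReal √(2 * e * L) ^ (-(2 - 1 / q)) := by
  have q0 : 0 < q := by linarith
  have hβ : 0 < 2 - 1 / q := by
    rw [sub_pos, div_lt_iff₀ q0]; linarith
  have hβ1 : 2 - 1 / q < 1 := by
    have : 1 < 1 / q := by rw [lt_div_iff₀ q0]; linarith
    linarith
  set β := 2 - 1 / q with hβd
  set M0 := ∫⁻ θ in Set.Ioo 0 π, ENNReal.ofReal |cos θ| ^ (-β) with hM0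
  have hM : M0 < ⊤ := lintegral_abs_cos_rpow_lt_top β hβ hβ1
  refine ⟨2 * (2 * M0 * ENNReal.ofReal (π / 2)),
    ENNReal.mul_lt_top (by norm_num) (ENNReal.mul_lt_top (ENNReal.mul_lt_top (by norm_num) hM)
      ENNReal.ofReal_lt_top), fun e L he hL => ?_⟩
  have hs : ∀ ψ ∈ Set.Ioo 0 (π / 2), ∀ φ ∈ Set.Ioo 0 (π / 2),
      ENNReal.ofReal |√(2 * (e * sin ψ ^ 2) * (L * sin φ ^ 2)) -
        √(2 * (e - e * sin ψ ^ 2) * (L - L * sin φ ^ 2))| ^ (-β) =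
      ENNReal.ofReal √(2 * e * L) ^ (-β) * ENNReal.ofReal |cos (ψ + φ)| ^ (-β) := by
    intro ψ hψ φ hφ
    have s1 : 0 < sin ψ := sin_pos_of_pos_of_lt_pi hψ.1 (by linarith [hψ.2, pi_pos])
    have c1 : 0 < cos ψ := cos_pos_of_mem_Ioo ⟨by linarith [hψ.1, pi_pos], hψ.2⟩
    have s2 : 0 < sin φ := sin_pos_of_pos_of_lt_pi hφ.1 (by linarith [hφ.2, pi_pos])
    have c2 : 0 < cos φ := cos_pos_of_mem_Ioo ⟨by linarith [hφ.1, pi_pos], hφ.2⟩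
    have e1 : 2 * (e * sin ψ ^ 2) * (L * sin φ ^ 2) = 2 * e * L * (sin ψ * sin φ) ^ 2 := by ring
    have e2 : 2 * (e - e * sin ψ ^ 2) * (L - L * sin φ ^ 2) =
        2 * e * L * (cos ψ * cos φ) ^ 2 := by
      rw [mul_pow, cos_sq' ψ, cos_sq' φ]; ring
    have hpos : 0 < √(2 * e * L) := by positivity
    have hnn : 0 ≤ 2 * e * L := by positivity
    rw [e1, e2, sqrt_mul hnn ((sin ψ * sin φ) ^ 2), sqrt_mul hnn ((cos ψ * cos φ) ^ 2),
      sqrt_sq (by positivity), sqrt_sq (by positivity), ← mul_sub, abs_mul, abs_of_pos hpos, ENNReal.ofReal_mul hpos.le,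
      ENNReal.mul_rpow_of_ne_top ENNReal.ofReal_ne_top ENNReal.ofReal_ne_top, cos_add,
      abs_sub_comm]
  calc _ ≤ ∫⁻ h in Set.Ioo 0 e, ENNReal.ofReal (h * (e - h)) ^ (-(1/2) : ℝ) *
        ∫⁻ y in Set.Ioo 0 L, (ENNReal.ofReal (y * (L - y)) ^ (-(1/2) : ℝ) *
        ENNReal.ofReal |√(2 * h * y) - √(2 * (e - h) * (L - y))| ^ (-β)) := by
        refine setLIntegral_mono' measurableSet_Ioo fun h hh => ?_
        rw [← lintegral_const_mul _ (by fun_prop)]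
        exact setLIntegral_mono' measurableSet_Ioo fun y hy => sliceKernel_rpow_le q h1 e L h y hh hy
    _ = 2 * ∫⁻ ψ in Set.Ioo 0 (π / 2), 2 * ∫⁻ φ in Set.Ioo 0 (π / 2),
        ENNReal.ofReal |√(2 * (e * sin ψ ^ 2) * (L * sin φ ^ 2)) -
        √(2 * (e - e * sin ψ ^ 2) * (L - L * sin φ ^ 2))| ^ (-β) := by
        rw [lintegral_sin_sq_subst e he]
        congr 1
        refine lintegral_congr fun ψ => ?_
        rw [lintegral_sin_sq_subst L hL]
    _ ≤ 2 * ∫⁻ ψ in Set.Ioo 0 (π / 2), 2 * (ENNReal.ofReal √(2 * e * L) ^ (-β) * M0) := by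
        gcongr 2 * ?_
        refine setLIntegral_mono' measurableSet_Ioo fun ψ hψ => ?_
        gcongr 2 * ?_
        rw [setLIntegral_congr_fun measurableSet_Ioo (hs ψ hψ), lintegral_const_mul _ (by fun_prop)]
        gcongr
        rw [hM0, ← lintegral_indicator measurableSet_Ioo, ← lintegral_indicator measurableSet_Ioo,
          ← lintegral_add_left_eq_self ((Set.Ioo 0 π).indicator _) ψ]
        refine lintegral_mono fun φ => ?_
        by_cases hφ : φ ∈ Set.Ioo 0 (π / 2)
        swap
        · rw [Set.indicator_of_notMem hφ]
          exact bot_le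
        rw [Set.indicator_of_mem hφ, Set.indicator_of_mem
          (Set.mem_Ioo.2 ⟨by linarith [hψ.1, hφ.1], by linarith [hψ.2, hφ.2]⟩)]
    _ = _ := by
        rw [setLIntegral_const, Real.volume_Ioo, sub_zero]
        ring

/-! ### The convolution along lines orthogonal to `z` -/

lemma G_rpow_nonneg (q a : ℝ) (x : E2) : 0 ≤ G a x ^ q := by
  apply rpow_nonneg
  unfold G
  split_ifs
  · positivity
  · exact le_rfl

lemma G_rpow_eq (p a : ℝ) (x : E2) (hx : ‖x‖ < a) :
    G a x ^ p = (2 * π) ^ (-p) * (a ^ 2 - ‖x‖ ^ 2) ^ (-(p / 2)) := by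
  have h0 := norm_nonneg x
  have h1 : 0 < a ^ 2 - ‖x‖ ^ 2 := by nlinarith
  have hp := pi_pos
  rw [G, if_pos hx, inv_rpow (by positivity), ← rpow_neg (by positivity),
    mul_rpow (by positivity) (by positivity), sqrt_eq_rpow, ← rpow_mul h1.le]
  congr 2
  ring

lemma G_rpow_le (q : ℝ) (hq : 0 < q) (a : ℝ) (x : E2) :
    G a x ^ (2 * q) ≤ if ‖x‖ < a then (a ^ 2 - ‖x‖ ^ 2) ^ (-q) else 0 := by
  split_ifs with h
  · have h0 := norm_nonneg x
    have h1 : 0 < a ^ 2 - ‖x‖ ^ 2 := by nlinarith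
    rw [G_rpow_eq _ _ _ h, show -(2 * q / 2) = -q by ring]
    apply mul_le_of_le_one_left (by positivity)
    apply rpow_le_one_of_one_le_of_nonpos _ (by linarith)
    linarith [two_le_pi]
  · rw [G, if_neg h, zero_rpow (by positivity)]

/-- Euclidean coordinates on the plane whose first axis points in the direction of `z`. -/
lemma exists_adapted_coordinates (z : E2) (hz : 0 < ‖z‖) : ∃ Φ : ℝ × ℝ → E2,
    MeasurePreserving Φ volume volume ∧ MeasurableEmbedding Φ ∧
    (∀ p, ‖Φ p‖ ^ 2 = p.1 ^ 2 + p.2 ^ 2) ∧ ∀ p, ‖z - Φ p‖ ^ 2 = (‖z‖ - p.1) ^ 2 + p.2 ^ 2 := by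
  obtain ⟨b, hb⟩ := Orthonormal.exists_orthonormalBasis_extension_of_card_eq (𝕜 := ℝ) (E := E2)
    (ι := Fin 2) (by simp) (v := fun _ => ‖z‖⁻¹ • z) (s := {0}) (by
      rw [orthonormal_subsingleton_iff]
      intro i
      simp [norm_smul, hz.ne'])
  have hb0 : b 0 = ‖z‖⁻¹ • z := hb 0 rfl
  have hz' : z = b.repr.symm (!₂[‖z‖, 0]) := by
    apply b.repr.injective
    rw [LinearIsometryEquiv.apply_symm_apply]
    have : z = ‖z‖ • b 0 := by rw [hb0, smul_smul, mul_inv_cancel₀ hz.ne', one_smul]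
    conv_lhs => rw [this]
    rw [map_smul, b.repr_self]
    ext i
    fin_cases i <;> simp
  let E : ℝ × ℝ ≃ᵐ E2 := (MeasurableEquiv.finTwoArrow.symm.trans
    (MeasurableEquiv.toLp 2 (Fin 2 → ℝ))).trans b.measurableEquiv.symm
  have hE : ∀ p, E p = b.repr.symm (!₂[p.1, p.2]) := fun p => rfl
  refine ⟨E, ?_, E.measurableEmbedding, fun p => ?_, fun p => ?_⟩
  · exact (((volume_preserving_finTwoArrow ℝ).symm _).trans
      (PiLp.volume_preserving_toLp (Fin 2))).trans (b.measurePreserving_measurableEquiv.symm _)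
  · rw [hE, LinearIsometryEquiv.norm_map, EuclideanSpace.norm_sq_eq]
    simp
  · rw [hE]
    conv_lhs => rw [hz']
    rw [← map_sub, LinearIsometryEquiv.norm_map, EuclideanSpace.norm_sq_eq]
    simp

/-- Let `(x₁, x₂)` be coordinates with first axis along `z`, and put `h = a - x₁`,
`y = a - h / 2`, `e = a + b - ‖z‖`, `L = (a + b + ‖z‖) / 2`. The chords cut out of the two discs by
the line of constant `x₁` then have squared half-lengths `2hy` and `2(e - h)(L - y)`, and the
line meets both discs only if `0 < h < e` and `0 < y < L`. -/
lemma lintegral_conv_le (q : ℝ) (h1 : 1/2 < q) (h2 : q < 1) (a b : ℝ) (z : E2) (hz : 0 < ‖z‖) :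
    ∫⁻ x : E2, ‖G a x ^ (2 * q) * G b (z - x) ^ (2 * q)‖ₑ ≤
      ENNReal.ofReal (2 * (1 / (1 - q) + 1 / (2 * q - 1))) *
      ∫⁻ h in Set.Ioo 0 (a + b - ‖z‖), (Set.Ioo 0 ((a + b + ‖z‖) / 2)).indicator
        (fun y => sliceKernel q (a + b - ‖z‖) ((a + b + ‖z‖) / 2) h y) (a - h / 2) := by
  have q0 : 0 < q := by linarith
  obtain ⟨Φ, hΦ, hΦe, n1, n2⟩ := exists_adapted_coordinates z hz
  set w := ‖z‖ with hw
  set e := a + b - w with he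
  set L := (a + b + w) / 2 with hL
  set F : E2 → ENNReal := fun x => ‖G a x ^ (2 * q) * G b (z - x) ^ (2 * q)‖ₑ with hF
  have hF0 : ∀ x, ¬ (‖x‖ < a ∧ ‖z - x‖ < b) → F x = 0 := by
    intro x hx
    rw [hF]
    beta_reduce
    rw [enorm_eq_zero]
    rw [not_and_or] at hx
    rcases hx with hx | hx
    · rw [G, if_neg hx, zero_rpow (by positivity), zero_mul]
    · rw [G, G, if_neg hx, zero_rpow (by positivity), mul_zero]
  have hFle : ∀ x, ‖x‖ < a ∧ ‖z - x‖ < b → F x ≤ ENNReal.ofReal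
      ((a ^ 2 - ‖x‖ ^ 2) ^ (-q) * (b ^ 2 - ‖z - x‖ ^ 2) ^ (-q)) := by
    rintro x ⟨hx, hx'⟩
    have i1 := G_rpow_le q q0 a x
    have i2 := G_rpow_le q q0 b (z - x)
    rw [if_pos hx] at i1
    rw [if_pos hx'] at i2
    have j1 := G_rpow_nonneg (2 * q) a x
    have j2 := G_rpow_nonneg (2 * q) b (z - x)
    rw [hF]
    beta_reduce
    rw [Real.enorm_of_nonneg (by positivity)]
    apply ENNReal.ofReal_le_ofReal
    gcongr
    exact j1.trans i1
  have slice : ∀ h : ℝ, ∫⁻ x2, F (Φ (a - h, x2)) ≤ (Set.Ioo 0 e).indicator (fun h =>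
      ENNReal.ofReal (2 * (1 / (1 - q) + 1 / (2 * q - 1))) *
        (Set.Ioo 0 L).indicator (fun y => sliceKernel q e L h y) (a - h / 2)) h := by
    intro h
    by_cases hh : h ∈ Set.Ioo 0 e ∧ a - h / 2 ∈ Set.Ioo 0 L
    · rw [Set.indicator_of_mem hh.1, Set.indicator_of_mem hh.2]
      have i1 := hh.1.1
      have i2 : 0 < e - h := sub_pos.2 hh.1.2
      have i3 := hh.2.1
      have i4 : 0 < L - (a - h / 2) := sub_pos.2 hh.2.2
      have hP : 0 < √(2 * h * (a - h / 2)) := by positivity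
      have hQ : 0 < √(2 * (e - h) * (L - (a - h / 2))) := by positivity
      refine le_trans (lintegral_mono fun x2 => ?_) (lintegral_crossSection_le q h1 h2 _ _ hP hQ)
      rw [sq_sqrt (by positivity), sq_sqrt (by positivity)]
      by_cases hx : ‖Φ (a - h, x2)‖ < a ∧ ‖z - Φ (a - h, x2)‖ < b
      · have e1 : 2 * h * (a - h / 2) - x2 ^ 2 = a ^ 2 - ‖Φ (a - h, x2)‖ ^ 2 := by
          rw [n1]; ring
        have e2 : 2 * (e - h) * (L - (a - h / 2)) - x2 ^ 2 = b ^ 2 - ‖z - Φ (a - h, x2)‖ ^ 2 := by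
          rw [n2, he, hL]; ring
        rw [if_pos, e1, e2]
        · exact hFle _ hx
        · rw [← sub_pos, e1, ← sub_pos (b := x2 ^ 2), e2, sub_pos, sub_pos]
          exact ⟨pow_lt_pow_left₀ hx.1 (norm_nonneg _) two_ne_zero,
            pow_lt_pow_left₀ hx.2 (norm_nonneg _) two_ne_zero⟩
      · rw [hF0 _ hx]; exact bot_le
    · refine le_trans (le_of_eq ?_) bot_le
      rw [ENNReal.bot_eq_zero, lintegral_eq_zero_of_ae_eq_zero]
      refine .of_forall fun x2 => hF0 _ fun hx => hh ?_
      have k1 : (a - h) ^ 2 < a ^ 2 := by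
        have := pow_lt_pow_left₀ hx.1 (norm_nonneg _) two_ne_zero
        rw [n1] at this
        nlinarith
      have k2 : (w - (a - h)) ^ 2 < b ^ 2 := by
        have := pow_lt_pow_left₀ hx.2 (norm_nonneg _) two_ne_zero
        rw [n2] at this
        nlinarith
      have l1 := abs_lt.1 (abs_lt_of_sq_lt_sq k1 ((norm_nonneg _).trans hx.1.le))
      have l2 := abs_lt.1 (abs_lt_of_sq_lt_sq k2 ((norm_nonneg _).trans hx.2.le))
      refine ⟨⟨?_, ?_⟩, ⟨?_, ?_⟩⟩ <;> linarith [l1.1, l1.2, l2.1, l2.2]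
  calc ∫⁻ x, F x = ∫⁻ p, F (Φ p) := (hΦ.lintegral_comp_emb hΦe F).symm
    _ ≤ ∫⁻ x1, ∫⁻ x2, F (Φ (x1, x2)) := lintegral_prod_le _
    _ = ∫⁻ h, ∫⁻ x2, F (Φ (a - h, x2)) :=
        (lintegral_sub_left_eq_self (fun x1 => ∫⁻ x2, F (Φ (x1, x2))) a).symm
    _ ≤ _ := lintegral_mono slice
    _ = _ := by
        rw [lintegral_indicator measurableSet_Ioo, lintegral_const_mul' _ _ ENNReal.ofReal_ne_top]

/-! ### Integration in time -/

/-- Jensen's inequality, as a comparison of the moments of order `p ≤ q`. -/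
lemma lintegral_rpow_le_rpow_mul_measure {X : Type*} [MeasurableSpace X] (μ : Measure X) (f : X → ENNReal) (hf : Measurable f)
    (p q : ℝ) (hp : 0 < p) (hpq : p ≤ q) :
    ∫⁻ x, f x ^ p ∂μ ≤ (∫⁻ x, f x ^ q ∂μ) ^ (p / q) * μ Set.univ ^ (1 - p / q) := by
  have hq : 0 < q := hp.trans_le hpq
  have := eLpNorm'_le_eLpNorm'_mul_rpow_measure_univ (μ := μ) hp hpq hf.aestronglyMeasurable
  simp only [eLpNorm', enorm_eq_self] at this
  have := ENNReal.rpow_le_rpow this hp.le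
  rw [ENNReal.mul_rpow_of_nonneg _ _ hp.le, ← ENNReal.rpow_mul, ← ENNReal.rpow_mul,
    ← ENNReal.rpow_mul] at this
  have e1 : 1 / p * p = 1 := by field_simp
  have e2 : 1 / q * p = p / q := by field_simp
  have e3 : (1 / p - 1 / q) * p = 1 - p / q := by field_simp
  rwa [e1, e2, e3, ENNReal.rpow_one] at this

lemma kernel_indicator_measurable (q t e L : ℝ) :
    Measurable (Function.uncurry fun r h : ℝ => (Set.Ioo 0 L).indicator
      (fun y => sliceKernel q e L h y) (t - r - h / 2)) := by
  have hset : MeasurableSet {p : ℝ × ℝ | t - p.1 - p.2 / 2 ∈ Set.Ioo 0 L} :=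
    measurableSet_Ioo.preimage (f := fun p : ℝ × ℝ => t - p.1 - p.2 / 2) (by fun_prop)
  have hk : Measurable fun p : ℝ × ℝ => sliceKernel q e L p.2 (t - p.1 - p.2 / 2) :=
    (sliceKernel_measurable q e L).comp
      (g := fun p : ℝ × ℝ => sliceKernel q e L p.1 p.2) (f := fun p : ℝ × ℝ => (p.2, t - p.1 - p.2 / 2))
      (by fun_prop)
  exact hk.indicator hset

/-- The case `δ = 1/q`: Jensen's inequality in `h`, then Tonelli and the change of variable
`y = t - r - h / 2` in `r`, reduce the claim to `lintegral_kernel_rpow_le`. -/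
lemma lintegral_slice_rpow_le (q : ℝ) (h1 : 1/2 < q) (h2 : q < 1) : ∃ M : ENNReal, M < ⊤ ∧
    ∀ t e L : ℝ, 0 < e → 0 < L → ∀ R : Set ℝ,
    ∫⁻ r in R, (∫⁻ h in Set.Ioo 0 e, (Set.Ioo 0 L).indicator
        (fun y => sliceKernel q e L h y) (t - r - h / 2)) ^ (1 / q) ≤
      M * ENNReal.ofReal e ^ (1 / q - 1) * ENNReal.ofReal √(2 * e * L) ^ (-(2 - 1 / q)) := by
  have q0 : 0 < q := by linarith
  obtain ⟨M, hM, hcore⟩ := lintegral_kernel_rpow_le q h1 h2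
  refine ⟨M, hM, fun t e L he hL R => ?_⟩
  set f : ℝ → ℝ → ENNReal := fun r h => (Set.Ioo 0 L).indicator
        (fun y => sliceKernel q e L h y) (t - r - h / 2) with hf
  have hfm : Measurable (Function.uncurry f) := kernel_indicator_measurable q t e L
  have step1 : ∀ r, (∫⁻ h in Set.Ioo 0 e, f r h) ^ (1 / q) ≤
      (∫⁻ h in Set.Ioo 0 e, f r h ^ (1 / q)) * ENNReal.ofReal e ^ (1 / q - 1) := by
    intro r
    have := lintegral_rpow_le_rpow_mul_measure (volume.restrict (Set.Ioo 0 e)) (f r) (hfm.of_uncurry_left) 1 (1 / q) one_pos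
      (by rw [le_div_iff₀ q0]; linarith)
    simp only [ENNReal.rpow_one, Measure.restrict_apply_univ, Real.volume_Ioo, sub_zero,
      one_div_one_div] at this
    refine (ENNReal.rpow_le_rpow this (by positivity : 0 ≤ 1 / q)).trans (le_of_eq ?_)
    rw [ENNReal.mul_rpow_of_nonneg _ _ (by positivity), ← ENNReal.rpow_mul, ← ENNReal.rpow_mul,
      mul_one_div_cancel q0.ne', ENNReal.rpow_one]
    congr 2
    field_simp
  calc _ ≤ ∫⁻ r in R, (∫⁻ h in Set.Ioo 0 e, f r h ^ (1 / q)) * ENNReal.ofReal e ^ (1 / q - 1) :=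
        lintegral_mono step1
    _ ≤ ∫⁻ r, (∫⁻ h in Set.Ioo 0 e, f r h ^ (1 / q)) * ENNReal.ofReal e ^ (1 / q - 1) :=
        setLIntegral_le_lintegral _ _
    _ = (∫⁻ h in Set.Ioo 0 e, ∫⁻ r, f r h ^ (1 / q)) * ENNReal.ofReal e ^ (1 / q - 1) := by
        have hm : Measurable fun r => ∫⁻ h in Set.Ioo 0 e, f r h ^ (1 / q) :=
          Measurable.lintegral_prod_right' (hfm.pow_const (1 / q))
        rw [lintegral_mul_const _ hm,
          lintegral_lintegral_swap (hfm.pow_const (1 / q)).aemeasurable]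
    _ = (∫⁻ h in Set.Ioo 0 e, ∫⁻ y in Set.Ioo 0 L, sliceKernel q e L h y ^ (1 / q)) *
          ENNReal.ofReal e ^ (1 / q - 1) := by
        congr 1
        refine lintegral_congr fun h => ?_
        rw [← lintegral_indicator measurableSet_Ioo, ← lintegral_sub_left_eq_self ((Set.Ioo 0 L).indicator _) (t - h / 2)]
        refine lintegral_congr fun r => ?_
        rw [hf]
        beta_reduce
        rw [show t - r - h / 2 = t - h / 2 - r by ring]
        by_cases hm : t - h / 2 - r ∈ Set.Ioo 0 L
        · rw [Set.indicator_of_mem hm, Set.indicator_of_mem hm]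
        · rw [Set.indicator_of_notMem hm, Set.indicator_of_notMem hm,
            ENNReal.zero_rpow_of_pos (by positivity)]
    _ ≤ _ := by
        rw [mul_right_comm]
        gcongr
        exact hcore e L he hL

/-- Passage from Bochner to lower Lebesgue integrals; this holds also when one of the Bochner
integrals has its default value `0`. -/
lemma ofReal_integral_conv_rpow_le (q δ s t : ℝ) (hδ : 0 < δ) (hst : s ≤ t) (z : E2) :
    ENNReal.ofReal (∫ r in s..t,
          (∫ x : E2, (G (t - r) x) ^ (2 * q) * (G (r - s) (z - x)) ^ (2 * q)) ^ δ) ≤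
    ∫⁻ r in Set.Ioc s t,
      (∫⁻ x : E2, ‖G (t - r) x ^ (2 * q) * G (r - s) (z - x) ^ (2 * q)‖ₑ) ^ δ := by
  rw [intervalIntegral.integral_of_le hst]
  refine (Real.ofReal_le_enorm _).trans ((enorm_integral_le_lintegral_enorm _).trans ?_)
  refine lintegral_mono fun r => ?_
  have h0 : 0 ≤ ∫ x : E2, (G (t - r) x) ^ (2 * q) * (G (r - s) (z - x)) ^ (2 * q) :=
    integral_nonneg fun x => mul_nonneg (G_rpow_nonneg _ _ _) (G_rpow_nonneg _ _ _)
  rw [Real.enorm_rpow_of_nonneg h0 hδ.le]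
  gcongr
  exact enorm_integral_le_lintegral_enorm _

/-- For `q ∈ (1/2,1)` there is a constant `C` depending only on `q` such that for every
`δ ∈ [1, 1/q]`, `0 ≤ s < t` and `z ∈ ℝ²` with `‖z‖ > 0`,
`∫_s^t [(G_{t-r}^{2q} ∗ G_{r-s}^{2q})(z)]^δ dr ≤ C (t-s)^{1-δ(2q-1)} G_{t-s}(z)^{δ(2q-1)}`. -/
theorem stmt_8 (q : ℝ) (hq : q ∈ Set.Ioo (1/2 : ℝ) 1) :
    ∃ C : ℝ, ∀ (δ s t : ℝ) (z : E2), δ ∈ Set.Icc 1 (1/q) → 0 ≤ s → s < t → 0 < ‖z‖ →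
      (∫ r in s..t,
          (∫ x : E2, (G (t - r) x) ^ (2 * q) * (G (r - s) (z - x)) ^ (2 * q)) ^ δ) ≤
        C * (t - s) ^ (1 - δ * (2 * q - 1)) * (G (t - s) z) ^ (δ * (2 * q - 1)) := by
  obtain ⟨h1, h2⟩ := hq
  have q0 : 0 < q := by linarith
  have p1 : 0 < 1 - q := by linarith
  have p2 : 0 < 2 * q - 1 := by linarith
  obtain ⟨M, hM, hmom⟩ := lintegral_slice_rpow_le q h1 h2
  set k := 2 * (1 / (1 - q) + 1 / (2 * q - 1)) with hk
  have k0 : 0 < k := by positivity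
  set m := M.toReal with hm
  have m0 : 0 ≤ m := ENNReal.toReal_nonneg
  have hMm : M = ENNReal.ofReal m := (ENNReal.ofReal_toReal hM.ne).symm
  refine ⟨(k + 1) ^ 2 * (m + 1) * (2 * π), fun δ s t z hδ hs hst hz => ?_⟩
  obtain ⟨hδ1, hδ2⟩ := hδ
  have δ0 : 0 < δ := by linarith
  have hδq : δ * q ≤ 1 := by rwa [le_div_iff₀ q0] at hδ2
  have hγ : 0 < δ * (2 * q - 1) := by positivity
  have hT : 0 < t - s := sub_pos.2 hst
  have hC : 0 ≤ (k + 1) ^ 2 * (m + 1) * (2 * π) := by positivity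
  have hrhs : 0 ≤ (k + 1) ^ 2 * (m + 1) * (2 * π) * (t - s) ^ (1 - δ * (2 * q - 1)) *
      (G (t - s) z) ^ (δ * (2 * q - 1)) :=
    mul_nonneg (mul_nonneg hC (by positivity)) (G_rpow_nonneg _ _ _)
  rw [← ENNReal.ofReal_le_ofReal_iff hrhs]
  refine (ofReal_integral_conv_rpow_le q δ s t δ0 hst.le z).trans ?_
  have hconv : ∀ r, ∫⁻ x : E2, ‖G (t - r) x ^ (2 * q) * G (r - s) (z - x) ^ (2 * q)‖ₑ ≤
      ENNReal.ofReal k * ∫⁻ h in Set.Ioo 0 (t - s - ‖z‖),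
        (Set.Ioo 0 ((t - s + ‖z‖) / 2)).indicator
        (fun y => sliceKernel q (t - s - ‖z‖) ((t - s + ‖z‖) / 2) h y) (t - r - h / 2) := by
    intro r
    have := lintegral_conv_le q h1 h2 (t - r) (r - s) z hz
    rwa [show t - r + (r - s) = t - s by ring] at this
  set w := ‖z‖ with hw
  set T := t - s with hTd
  rcases le_or_gt T w with hTw | hwT
  -- The two discs are disjoint, so the convolution vanishes.
  · refine le_trans (le_of_eq ?_) bot_le
    rw [ENNReal.bot_eq_zero, lintegral_eq_zero_of_ae_eq_zero]
    refine .of_forall fun r => ?_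
    have := hconv r
    rw [Set.Ioo_eq_empty (by linarith : ¬ (0 < T - w)), setLIntegral_empty, mul_zero] at this
    simp only [Pi.zero_apply]
    rw [nonpos_iff_eq_zero.1 this, ENNReal.zero_rpow_of_pos δ0]
  set e := T - w with he
  set L := (T + w) / 2 with hL
  have e0 : 0 < e := sub_pos.2 hwT
  have L0 : 0 < L := by positivity
  set N : ℝ → ENNReal := fun r => ∫⁻ h in Set.Ioo 0 e,
        (Set.Ioo 0 L).indicator (fun y => sliceKernel q e L h y) (t - r - h / 2) with hN
  have hNm : Measurable N :=
    Measurable.lintegral_prod_right' (kernel_indicator_measurable q t e L)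
  have hD : 2 * e * L = T ^ 2 - w ^ 2 := by rw [he, hL]; ring
  have D0 : 0 < T ^ 2 - w ^ 2 := by rw [← hD]; positivity
  have hmom' : ∫⁻ r in Set.Ioc s t, N r ^ (1 / q) ≤ ENNReal.ofReal
      (m * T ^ (1 / q - 1) * √(T ^ 2 - w ^ 2) ^ (-(2 - 1 / q))) := by
    refine (hmom t e L e0 L0 (Set.Ioc s t)).trans ?_
    have hq1 : 0 ≤ 1 / q - 1 := by rw [sub_nonneg, le_div_iff₀ q0]; linarith
    rw [hMm, hD, ENNReal.ofReal_rpow_of_pos e0, ENNReal.ofReal_rpow_of_pos (by positivity),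
      ← ENNReal.ofReal_mul m0, ← ENNReal.ofReal_mul (by positivity)]
    apply ENNReal.ofReal_le_ofReal
    gcongr
    linarith
  calc _ ≤ ∫⁻ r in Set.Ioc s t, (ENNReal.ofReal k * N r) ^ δ := by
        refine lintegral_mono fun r => ?_
        exact ENNReal.rpow_le_rpow (hconv r) δ0.le
    _ = ENNReal.ofReal (k ^ δ) * ∫⁻ r in Set.Ioc s t, N r ^ δ := by
        simp_rw [ENNReal.mul_rpow_of_nonneg _ _ δ0.le]
        rw [lintegral_const_mul _ (hNm.pow_const δ), ENNReal.ofReal_rpow_of_pos k0]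
    _ ≤ ENNReal.ofReal (k ^ δ) * ((ENNReal.ofReal
          (m * T ^ (1 / q - 1) * √(T ^ 2 - w ^ 2) ^ (-(2 - 1 / q)))) ^ (δ * q) *
          ENNReal.ofReal T ^ (1 - δ * q)) := by
        have := lintegral_rpow_le_rpow_mul_measure (volume.restrict (Set.Ioc s t)) N hNm δ (1 / q) δ0 hδ2
        rw [Measure.restrict_apply_univ, Real.volume_Ioc, ← hTd,
          show δ / (1 / q) = δ * q by field_simp] at this
        refine mul_le_mul_right (this.trans ?_) _
        gcongr
    _ = ENNReal.ofReal (k ^ δ * ((m * T ^ (1 / q - 1) *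
          √(T ^ 2 - w ^ 2) ^ (-(2 - 1 / q))) ^ (δ * q) * T ^ (1 - δ * q))) := by
        rw [ENNReal.ofReal_rpow_of_nonneg (by positivity) (by positivity),
          ENNReal.ofReal_rpow_of_pos hT, ← ENNReal.ofReal_mul (by positivity),
          ← ENNReal.ofReal_mul (by positivity)]
    _ ≤ _ := by
        apply ENNReal.ofReal_le_ofReal
        have hδ2' : δ ≤ 2 := hδ2.trans (by rw [div_le_iff₀ q0]; linarith)
        have b1 : k ^ δ ≤ (k + 1) ^ 2 := by
          calc k ^ δ ≤ (k + 1) ^ δ := rpow_le_rpow k0.le (by linarith) δ0.le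
            _ ≤ (k + 1) ^ (2:ℝ) := rpow_le_rpow_of_exponent_le (by linarith) hδ2'
            _ = _ := by norm_cast
        have b2 : m ^ (δ * q) ≤ m + 1 := by
          calc m ^ (δ * q) ≤ (m + 1) ^ (δ * q) := rpow_le_rpow m0 (by linarith) (by positivity)
            _ ≤ (m + 1) ^ (1:ℝ) := rpow_le_rpow_of_exponent_le (by linarith) hδq
            _ = _ := rpow_one _
        -- The factor `2π` in the constant absorbs the normalization of `G`, as `δ (2q - 1) ≤ 1`.
        have b3 : 1 ≤ 2 * π * (2 * π) ^ (-(δ * (2 * q - 1))) := by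
          have : (1:ℝ) ≤ 2 * π := by linarith [two_le_pi]
          nth_rewrite 1 [← rpow_one (2 * π)]
          rw [← rpow_add (by positivity)]
          apply one_le_rpow this
          nlinarith
        have t1 : (T ^ (1 / q - 1)) ^ (δ * q) * T ^ (1 - δ * q) = T ^ (1 - δ * (2 * q - 1)) := by
          rw [← rpow_mul hT.le, ← rpow_add hT]
          congr 1
          field_simp
          ring
        have t2 : (√(T ^ 2 - w ^ 2) ^ (-(2 - 1 / q))) ^ (δ * q) =
            (T ^ 2 - w ^ 2) ^ (-(δ * (2 * q - 1) / 2)) := by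
          rw [sqrt_eq_rpow, ← rpow_mul D0.le, ← rpow_mul D0.le]
          congr 1
          field_simp
        rw [G_rpow_eq _ _ _ hwT, mul_rpow (x := m * _) (by positivity) (by positivity),
          mul_rpow m0 (by positivity), t2]
        set A := T ^ (1 - δ * (2 * q - 1))
        set B := (T ^ 2 - w ^ 2) ^ (-(δ * (2 * q - 1) / 2))
        have hA : 0 ≤ A := by positivity
        have hB : 0 ≤ B := by positivity
        calc _ = k ^ δ * m ^ (δ * q) * (((T ^ (1 / q - 1)) ^ (δ * q) * T ^ (1 - δ * q)) * B) * 1 := by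
              ring
          _ = k ^ δ * m ^ (δ * q) * (A * B) * 1 := by rw [t1]
          _ ≤ (k + 1) ^ 2 * (m + 1) * (A * B) * (2 * π * (2 * π) ^ (-(δ * (2 * q - 1)))) := by
              gcongr
          _ = _ := by ring
end
end

section
/- Let q ∈ (1/2,1), s > 0, w > 0 and x > 0 be such that (√x − w)² < s² < (√x + w)². Then 𝒮_q(x) = ∫_{D(x)} (s² − y)^{−q} [ (√x + w)² − y ]^{−1/2} [ y − (√x − w)² ]^{−1/2} dy satisfies 𝒮_q(x) ≤ Beta(1/2, 1−q) · [ (√x + w)² − s² ]^{−1/2} · [ s² − (√x − w)² ]^{(1/2)−q}, where D(x) = { y ∈ ℝ : y < s², (√x − w)² < y < (√x + w)² } and Beta denotes the Euler beta function. -/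
/-! On the domain of integration `y < s²`, so the factor `[(√x+w)² - y]^{-1/2}` is at most its value
at `y = s²`, which comes out of the integral. The affine substitution
`y = a + (s² - a) t` with `a = (√x-w)²` turns the remaining integral over `(a, s²)` into the Euler
beta integral times the scaling factor `(s² - a)^{1 - q - 1/2}`. The convergence of the beta
integral (`intervalIntegrable_beta`) is needed for the comparison, since the Bochner integral of a
non-integrable function is `0`. -/

open MeasureTheory Real

noncomputable section

/-- Euler beta function `Beta(a,b) = ∫₀¹ x^{a-1}(1-x)^{b-1} dx`. -/
def eulerBeta (a b : ℝ) : ℝ := ∫ x in (0:ℝ)..1, x ^ (a - 1) * (1 - x) ^ (b - 1)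

/-- The real form of `Complex.betaIntegral_convergent`. -/
lemma intervalIntegrable_beta {u v : ℝ} (hu : 0 < u) (hv : 0 < v) :
    IntervalIntegrable (fun t : ℝ => t ^ (u - 1) * (1 - t) ^ (v - 1)) volume 0 1 := by
  have h := Complex.betaIntegral_convergent (u := (u : ℂ)) (v := (v : ℂ)) (by simpa) (by simpa)
  rw [intervalIntegrable_iff_integrableOn_Ioo_of_le zero_le_one] at h ⊢
  refine IntegrableOn.congr_fun h.re (fun t ht => ?_) measurableSet_Ioo
  have h1 : (0 : ℝ) ≤ 1 - t := by linarith [ht.2]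
  have e : (t : ℂ) ^ ((u : ℂ) - 1) * (1 - (t : ℂ)) ^ ((v : ℂ) - 1)
      = ((t ^ (u - 1) * (1 - t) ^ (v - 1) : ℝ) : ℂ) := by
    rw [Complex.ofReal_mul, Complex.ofReal_cpow ht.1.le, Complex.ofReal_cpow h1]
    push_cast
    rfl
  simp only [e]
  exact Complex.ofReal_re _

/-- The estimate for arbitrary endpoints `a < b < c`, where `a = (√x-w)²`, `b = s²`,
`c = (√x+w)²` in the application. -/
lemma integral_le_eulerBeta {q a b c : ℝ} (hq : q < 1) (hab : a < b) (hbc : b < c) :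
    (∫ y in a..b, (b - y) ^ (-q) * (c - y) ^ (-(1 : ℝ) / 2) * (y - a) ^ (-(1 : ℝ) / 2)) ≤
      eulerBeta (1/2) (1 - q) * (c - b) ^ (-(1 : ℝ) / 2) * (b - a) ^ (1/2 - q) := by
  have hL : 0 < b - a := sub_pos.2 hab
  have hsub := intervalIntegral.mul_integral_comp_mul_add (a := 0) (b := 1)
    (f := fun y : ℝ => (b - y) ^ (-q) * (c - y) ^ (-(1 : ℝ) / 2) * (y - a) ^ (-(1 : ℝ) / 2))
    (b - a) a
  simp only [mul_zero, zero_add, mul_one, sub_add_cancel] at hsub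
  rw [← hsub]
  have hbeta := intervalIntegrable_beta (u := 1/2) (v := 1 - q) (by norm_num) (by linarith)
  set K : ℝ := (b - a) ^ (-q) * (c - b) ^ (-(1 : ℝ) / 2) * (b - a) ^ (-(1 : ℝ) / 2) with hK
  have hmono : (∫ t in (0:ℝ)..1, (b - ((b - a) * t + a)) ^ (-q) *
        (c - ((b - a) * t + a)) ^ (-(1 : ℝ) / 2) * ((b - a) * t + a - a) ^ (-(1 : ℝ) / 2)) ≤
      ∫ t in (0:ℝ)..1, K * (t ^ ((1/2 : ℝ) - 1) * (1 - t) ^ (1 - q - 1)) := by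
    have hbeta' := hbeta.const_mul K
    rw [intervalIntegrable_iff_integrableOn_Ioo_of_le zero_le_one] at hbeta'
    rw [intervalIntegral.integral_of_le zero_le_one, intervalIntegral.integral_of_le zero_le_one,
      integral_Ioc_eq_integral_Ioo, integral_Ioc_eq_integral_Ioo]
    have key : ∀ t ∈ Set.Ioo (0:ℝ) 1,
        0 ≤ b - ((b - a) * t + a) ∧ (b - a) * t + a ≤ b := by
      intro t ht
      have : (b - a) * t ≤ b - a := by nlinarith [ht.2]
      exact ⟨by linarith, by linarith⟩
    refine integral_mono_of_nonneg ?_ hbeta' ?_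
    · refine (ae_restrict_iff' measurableSet_Ioo).2 (Filter.Eventually.of_forall fun t ht => ?_)
      obtain ⟨k1, k3⟩ := key t ht
      have k4 : 0 ≤ (b - a) * t := mul_nonneg hL.le ht.1.le
      exact mul_nonneg (mul_nonneg (rpow_nonneg k1 _) (rpow_nonneg (by linarith) _))
        (rpow_nonneg (by linarith) _)
    · refine (ae_restrict_iff' measurableSet_Ioo).2 (Filter.Eventually.of_forall fun t ht => ?_)
      obtain ⟨-, k3⟩ := key t ht
      have h1t : 0 ≤ 1 - t := by linarith [ht.2]
      have e1 : b - ((b - a) * t + a) = (b - a) * (1 - t) := by ring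
      have e2 : (b - a) * t + a - a = (b - a) * t := by ring
      have hc : (c - ((b - a) * t + a)) ^ (-(1 : ℝ) / 2) ≤ (c - b) ^ (-(1 : ℝ) / 2) :=
        rpow_le_rpow_of_nonpos (by linarith) (by linarith) (by norm_num)
      have p1 : (1/2 : ℝ) - 1 = -1 / 2 := by norm_num
      have p2 : 1 - q - 1 = -q := by ring
      simp only [e1, e2, p1, p2]
      rw [mul_rpow hL.le h1t, mul_rpow hL.le ht.1.le, hK]
      calc _ ≤ (b - a) ^ (-q) * (1 - t) ^ (-q) * (c - b) ^ (-(1 : ℝ) / 2) *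
            ((b - a) ^ (-(1 : ℝ) / 2) * t ^ (-(1 : ℝ) / 2)) := by
            have := ht.1.le
            gcongr
        _ = _ := by ring
  rw [intervalIntegral.integral_const_mul] at hmono
  refine (mul_le_mul_of_nonneg_left hmono hL.le).trans_eq ?_
  -- the Jacobian `b - a` combines with the two powers extracted from the integrand
  have hpow : (b - a) ^ (1/2 - q) = (b - a) * (b - a) ^ (-q) * (b - a) ^ (-(1 : ℝ) / 2) := by
    rw [← rpow_one_add' hL.le (by linarith : 0 < 1 + -q).ne', ← rpow_add hL]
    congr 1
    ring
  rw [hpow, hK, eulerBeta]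
  ring

/-- For `q ∈ (1/2,1)`, `s, w, x > 0` with `(√x-w)² < s² < (√x+w)²`,
`𝒮_q(x) = ∫_{D(x)} (s²-y)^{-q}[(√x+w)²-y]^{-1/2}[y-(√x-w)²]^{-1/2} dy`
`≤ Beta(1/2, 1-q) [(√x+w)²-s²]^{-1/2} [s²-(√x-w)²]^{1/2-q}`,
where `D(x) = {y : y < s², (√x-w)² < y < (√x+w)²}`. -/
theorem stmt_11 (q s w x : ℝ) (hq : q ∈ Set.Ioo (1/2 : ℝ) 1) (hs : 0 < s) (hw : 0 < w)
    (hx : 0 < x) (h1 : (Real.sqrt x - w) ^ 2 < s ^ 2) (h2 : s ^ 2 < (Real.sqrt x + w) ^ 2) :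
    (∫ y in {y : ℝ | y < s ^ 2 ∧ (Real.sqrt x - w) ^ 2 < y ∧ y < (Real.sqrt x + w) ^ 2},
        (s ^ 2 - y) ^ (-q) * ((Real.sqrt x + w) ^ 2 - y) ^ (-(1 : ℝ) / 2) *
          (y - (Real.sqrt x - w) ^ 2) ^ (-(1 : ℝ) / 2)) ≤
      eulerBeta (1/2) (1 - q) * ((Real.sqrt x + w) ^ 2 - s ^ 2) ^ (-(1 : ℝ) / 2) *
        (s ^ 2 - (Real.sqrt x - w) ^ 2) ^ (1/2 - q) := by
  have hD : {y : ℝ | y < s ^ 2 ∧ (Real.sqrt x - w) ^ 2 < y ∧ y < (Real.sqrt x + w) ^ 2} =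
      Set.Ioo ((Real.sqrt x - w) ^ 2) (s ^ 2) := by
    ext y
    exact ⟨fun h => ⟨h.2.1, h.1⟩, fun h => ⟨h.2, h.1, h.2.trans h2⟩⟩
  rw [hD, ← integral_Ioc_eq_integral_Ioo, ← intervalIntegral.integral_of_le h1.le]
  exact integral_le_eulerBeta hq.2 h1 h2
end
end

section
/- Let q ∈ (1/2,1), 0 < w < s < t, and define 𝒮_q(x) = ∫_{D(x)} (s² − y)^{−q} [ (√x + w)² − y ]^{−1/2} [ y − (√x − w)² ]^{−1/2} dy with D(x) = { y ∈ ℝ : y < s², (√x − w)² < y < (√x + w)² }. There is a constant C depending only on q such that 𝐈_B := ∫_0^{(s−w)²} (t² − x)^{−q} 𝒮_q(x) dx ≤ C · (t² − (s−w)²)^{1−2q}. -/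
open MeasureTheory Real

noncomputable section

/-!
For `0 < x < (s-w)²` the domain `D(x)` is the whole interval between `a = (√x-w)²` and
`b = (√x+w)²`, and `b < s²`. There `(s²-y)^{-q} ≤ (s²-b)^{-q}`, while
`∫_a^b (b-y)^{-1/2} (y-a)^{-1/2} dy` is bounded by an absolute constant
(`setIntegral_arcsine_weight_le`). With `m = s-w`, the factorization
`s² - b = (m-√x)(s+w+√x) ≥ (m-√x)(m+√x) = m² - x` gives `𝒮_q(x) ≤ 4 (m²-x)^{-q}`.

It remains to bound `∫_0^{m²} (t²-x)^{-q} (m²-x)^{-q} dx`. Put `A = t²-m²` and `u = m²-x`: the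
integrand `(A+u)^{-q} u^{-q}` is at most `A^{-q} u^{-q}` for `u ≤ A` and `u^{-2q}` for `u > A`.
As `q < 1 < 2q`, both majorants (`tailMajorant`) are integrable, with total integral
`(1/(1-q) + 1/(2q-1)) A^{1-2q}`.
-/

/-- The power `z^{-r}` truncated to `0 < z ≤ L`, extended by zero to the line. -/
def truncPow (r L : ℝ) : ℝ → ℝ := (Set.Ioc 0 L).indicator fun z => z ^ (-r)

lemma truncPow_nonneg (r L z : ℝ) : 0 ≤ truncPow r L z :=
  Set.indicator_nonneg (fun _ hy => rpow_nonneg hy.1.le _) z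

lemma integrable_truncPow {r L : ℝ} (hr : r < 1) (hL : 0 ≤ L) : Integrable (truncPow r L) := by
  unfold truncPow
  rw [integrable_indicator_iff measurableSet_Ioc,
    ← intervalIntegrable_iff_integrableOn_Ioc_of_le hL]
  exact intervalIntegral.intervalIntegrable_rpow' (by linarith)

lemma integral_truncPow {r L : ℝ} (hr : r < 1) (hL : 0 ≤ L) :
    ∫ z, truncPow r L z = L ^ (1 - r) / (1 - r) := by
  unfold truncPow
  rw [integral_indicator measurableSet_Ioc, ← intervalIntegral.integral_of_le hL,
    integral_rpow (Or.inl (by linarith)), zero_rpow (by linarith)]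
  rw [show -r + 1 = 1 - r by ring, sub_zero]

/-- A majorant of `(A+u)^{-q} u^{-q}` on `u > 0`, extended by zero to the line. -/
def tailMajorant (q A : ℝ) : ℝ → ℝ := fun u =>
  A ^ (-q) * truncPow q A u + (Set.Ioi A).indicator (fun z => z ^ (-(2 * q))) u

lemma tailMajorant_nonneg {q A : ℝ} (hA : 0 < A) (u : ℝ) : 0 ≤ tailMajorant q A u :=
  add_nonneg (mul_nonneg (rpow_nonneg hA.le _) (truncPow_nonneg _ _ _))
    (Set.indicator_nonneg (fun _ hy => rpow_nonneg (hA.trans hy).le _) u)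

lemma integrable_tail {q A : ℝ} (hq : 1 / 2 < q) (hA : 0 < A) :
    Integrable ((Set.Ioi A).indicator fun z : ℝ => z ^ (-(2 * q))) := by
  rw [integrable_indicator_iff measurableSet_Ioi]
  exact integrableOn_Ioi_rpow_of_lt (by linarith) hA

lemma integrable_tailMajorant {q A : ℝ} (hq : 1 / 2 < q) (hq' : q < 1) (hA : 0 < A) :
    Integrable (tailMajorant q A) :=
  ((integrable_truncPow hq' hA.le).const_mul _).add (integrable_tail hq hA)

lemma integral_tailMajorant {q A : ℝ} (hq : 1 / 2 < q) (hq' : q < 1) (hA : 0 < A) :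
    ∫ u, tailMajorant q A u = (1 / (1 - q) + 1 / (2 * q - 1)) * A ^ (1 - 2 * q) := by
  unfold tailMajorant
  rw [integral_add ((integrable_truncPow hq' hA.le).const_mul _) (integrable_tail hq hA),
    integral_const_mul, integral_truncPow hq' hA.le, integral_indicator measurableSet_Ioi,
    integral_Ioi_rpow_of_lt (by linarith) hA, show -(2 * q) + 1 = 1 - 2 * q by ring,
    show A ^ (1 - 2 * q) = A ^ (-q) * A ^ (1 - q) by rw [← rpow_add hA]; ring_nf,
    show 1 - 2 * q = -(2 * q - 1) by ring, neg_div_neg_eq]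
  ring

lemma le_tailMajorant {q A u : ℝ} (hq : 0 < q) (hA : 0 < A) (hu : 0 < u) :
    (A + u) ^ (-q) * u ^ (-q) ≤ tailMajorant q A u := by
  unfold tailMajorant truncPow
  rcases le_or_gt u A with h | h
  · rw [Set.indicator_of_mem (Set.mem_Ioc.2 ⟨hu, h⟩),
      Set.indicator_of_notMem (by simpa using h), add_zero]
    exact mul_le_mul_of_nonneg_right
      (rpow_le_rpow_of_nonpos hA (by linarith) (by linarith)) (rpow_nonneg hu.le _)
  · rw [Set.indicator_of_notMem (fun hh => absurd hh.2 (not_le.2 h)),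
      Set.indicator_of_mem (Set.mem_Ioi.2 h), mul_zero, zero_add,
      show -(2 * q) = -q + -q by ring, rpow_add hu]
    exact mul_le_mul_of_nonneg_right
      (rpow_le_rpow_of_nonpos hu (by linarith) (by linarith)) (rpow_nonneg hu.le _)

/-- Equivalent to `√(p+r) ≤ √p + √r`; it separates the two endpoint singularities of the
arcsine weight. -/
lemma arcsine_weight_le {p r : ℝ} (hp : 0 < p) (hr : 0 < r) :
    p ^ (-(1 : ℝ) / 2) * r ^ (-(1 : ℝ) / 2) ≤
      (p + r) ^ (-(1 : ℝ) / 2) * (p ^ (-(1 : ℝ) / 2) + r ^ (-(1 : ℝ) / 2)) := by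
  have key : ∀ z : ℝ, 0 < z → z ^ (-(1 : ℝ) / 2) = (√z)⁻¹ := fun z hz => by
    rw [sqrt_eq_rpow, ← rpow_neg hz.le]; norm_num
  rw [key p hp, key r hr, key _ (add_pos hp hr)]
  have h1 := sqrt_pos.2 hp
  have h2 := sqrt_pos.2 hr
  have h3 := sqrt_pos.2 (add_pos hp hr)
  have h4 : √(p + r) ≤ √p + √r := by
    rw [sqrt_le_left (by positivity)]
    nlinarith [sq_sqrt hp.le, sq_sqrt hr.le, mul_pos h1 h2]
  rw [show (√(p + r))⁻¹ * ((√p)⁻¹ + (√r)⁻¹) =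
    ((√p + √r) / √(p + r)) * ((√p)⁻¹ * (√r)⁻¹) by field_simp; ring]
  exact le_mul_of_one_le_left (by positivity) ((one_le_div h3).2 h4)

/-- The exact value of the weight's integral is `π`, so that the bound `4 c` below is not sharp. -/
lemma setIntegral_arcsine_weight_le {a b c : ℝ} {f : ℝ → ℝ} (hab : a < b) (hc : 0 ≤ c)
    (hf : ∀ y ∈ Set.Ioo a b, 0 ≤ f y ∧ f y ≤ c) :
    ∫ y in Set.Ioo a b, f y * (b - y) ^ (-(1 : ℝ) / 2) * (y - a) ^ (-(1 : ℝ) / 2) ≤ 4 * c := by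
  have hL : 0 < b - a := sub_pos.2 hab
  have hP : Integrable (truncPow (1 / 2) (b - a)) := integrable_truncPow (by norm_num) hL.le
  set K : ℝ := c * (b - a) ^ (-(1 : ℝ) / 2) with hK
  have hK0 : 0 ≤ K := mul_nonneg hc (rpow_nonneg hL.le _)
  let G : ℝ → ℝ := fun y =>
    K * (truncPow (1 / 2) (b - a) (b - y) + truncPow (1 / 2) (b - a) (y - a))
  have hG : Integrable G := ((hP.comp_sub_left b).add (hP.comp_sub_right a)).const_mul K
  have hG0 : ∀ y, 0 ≤ G y := fun y =>
    mul_nonneg hK0 (add_nonneg (truncPow_nonneg _ _ _) (truncPow_nonneg _ _ _))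
  calc ∫ y in Set.Ioo a b, f y * (b - y) ^ (-(1 : ℝ) / 2) * (y - a) ^ (-(1 : ℝ) / 2)
      ≤ ∫ y in Set.Ioo a b, G y := by
        refine integral_mono_of_nonneg ?_ hG.integrableOn ?_
        · filter_upwards [ae_restrict_mem measurableSet_Ioo] with y hy
          exact mul_nonneg (mul_nonneg (hf y hy).1 (rpow_nonneg (sub_pos.2 hy.2).le _))
            (rpow_nonneg (sub_pos.2 hy.1).le _)
        · filter_upwards [ae_restrict_mem measurableSet_Ioo] with y hy
          have h1 : 0 < b - y := sub_pos.2 hy.2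
          have h2 : 0 < y - a := sub_pos.2 hy.1
          have h3 := arcsine_weight_le h1 h2
          rw [show b - y + (y - a) = b - a by ring] at h3
          simp only [G, truncPow]
          rw [Set.indicator_of_mem (Set.mem_Ioc.2 ⟨h1, by linarith⟩),
            Set.indicator_of_mem (Set.mem_Ioc.2 ⟨h2, by linarith⟩), hK, mul_assoc, mul_assoc,
            show -(1 / 2 : ℝ) = -(1 : ℝ) / 2 by ring]
          exact mul_le_mul (hf y hy).2 h3
            (mul_nonneg (rpow_nonneg h1.le _) (rpow_nonneg h2.le _)) hc
    _ ≤ ∫ y, G y := setIntegral_le_integral hG (Filter.Eventually.of_forall hG0)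
    _ = 4 * c := by
        simp only [G]
        rw [integral_const_mul, integral_add (hP.comp_sub_left b) (hP.comp_sub_right a),
          integral_sub_left_eq_self (truncPow (1 / 2) (b - a)) volume b,
          integral_sub_right_eq_self (truncPow (1 / 2) (b - a)) a,
          integral_truncPow (by norm_num) hL.le, hK]
        have : (b - a) ^ (-(1 : ℝ) / 2) * (b - a) ^ (1 - 1 / 2 : ℝ) = 1 := by
          rw [← rpow_add hL]; norm_num
        linear_combination 4 * c * this

/-- The pointwise bound `𝒮_q(x) ≤ 4 ((s-w)² - x)^{-q}`. -/
lemma inner_integral_le {q s w x : ℝ} (hq : 0 < q) (hw : 0 < w) (hws : w < s)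
    (hx : x ∈ Set.Ioo (0 : ℝ) ((s - w) ^ 2)) :
    ∫ y in {y : ℝ | y < s ^ 2 ∧ (√x - w) ^ 2 < y ∧ y < (√x + w) ^ 2},
        (s ^ 2 - y) ^ (-q) * ((√x + w) ^ 2 - y) ^ (-(1 : ℝ) / 2) *
          (y - (√x - w) ^ 2) ^ (-(1 : ℝ) / 2) ≤ 4 * ((s - w) ^ 2 - x) ^ (-q) := by
  have hr : 0 < √x := sqrt_pos.2 hx.1
  have hrm : √x < s - w := (sqrt_lt' (by linarith)).2 hx.2
  have hgap : (s - w) ^ 2 - x ≤ s ^ 2 - (√x + w) ^ 2 := by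
    nlinarith [sq_sqrt hx.1.le, mul_pos hw (sub_pos.2 hrm)]
  have hpos : 0 < (s - w) ^ 2 - x := sub_pos.2 hx.2
  have hset : {y : ℝ | y < s ^ 2 ∧ (√x - w) ^ 2 < y ∧ y < (√x + w) ^ 2} =
      Set.Ioo ((√x - w) ^ 2) ((√x + w) ^ 2) := by
    ext y
    exact ⟨fun h => h.2, fun h => ⟨by linarith [h.2], h⟩⟩
  rw [hset]
  refine setIntegral_arcsine_weight_le (by nlinarith [mul_pos hr hw])
    (rpow_nonneg hpos.le _) fun y hy => ?_
  have hy2 : (s - w) ^ 2 - x ≤ s ^ 2 - y := by linarith [hy.2]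
  exact ⟨rpow_nonneg (hpos.le.trans hy2) _, rpow_le_rpow_of_nonpos hpos hy2 (by linarith)⟩

/-- For `q ∈ (1/2,1)` there is a constant `C` depending only on `q` such that for all
`0 < w < s < t`, with
`𝒮_q(x) = ∫_{D(x)} (s²-y)^{-q}[(√x+w)²-y]^{-1/2}[y-(√x-w)²]^{-1/2} dy`,
`𝐈_B = ∫_0^{(s-w)²} (t²-x)^{-q} 𝒮_q(x) dx ≤ C (t²-(s-w)²)^{1-2q}`. -/
theorem stmt_14 (q : ℝ) (hq : q ∈ Set.Ioo (1/2 : ℝ) 1) :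
    ∃ C : ℝ, ∀ s t w : ℝ, 0 < w → w < s → s < t →
      (∫ x in Set.Ioo (0 : ℝ) ((s - w) ^ 2),
          (t ^ 2 - x) ^ (-q) *
            ∫ y in {y : ℝ | y < s ^ 2 ∧ (Real.sqrt x - w) ^ 2 < y ∧
                y < (Real.sqrt x + w) ^ 2},
              (s ^ 2 - y) ^ (-q) * ((Real.sqrt x + w) ^ 2 - y) ^ (-(1 : ℝ) / 2) *
                (y - (Real.sqrt x - w) ^ 2) ^ (-(1 : ℝ) / 2)) ≤
        C * (t ^ 2 - (s - w) ^ 2) ^ (1 - 2 * q) := by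
  obtain ⟨hq1, hq2⟩ := hq
  have hq0 : 0 < q := by linarith
  refine ⟨4 * (1 / (1 - q) + 1 / (2 * q - 1)), fun s t w hw hws hst => ?_⟩
  have hA : 0 < t ^ 2 - (s - w) ^ 2 := by nlinarith
  set A := t ^ 2 - (s - w) ^ 2 with hAdef
  let G : ℝ → ℝ := fun x => 4 * tailMajorant q A ((s - w) ^ 2 - x)
  have hG : Integrable G :=
    ((integrable_tailMajorant hq1 hq2 hA).comp_sub_left _).const_mul 4
  have hG0 : ∀ x, 0 ≤ G x := fun x => mul_nonneg (by norm_num) (tailMajorant_nonneg hA _)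
  refine (integral_mono_of_nonneg (g := G) ?_ hG.integrableOn ?_).trans
    ((setIntegral_le_integral hG (Filter.Eventually.of_forall hG0)).trans_eq ?_)
  · filter_upwards [ae_restrict_mem measurableSet_Ioo] with x hx
    refine mul_nonneg (rpow_nonneg (by linarith [hx.2]) _) (setIntegral_nonneg ?_ ?_)
    · exact measurableSet_Iio.inter measurableSet_Ioo
    · rintro y ⟨h1, h2, h3⟩
      exact mul_nonneg (mul_nonneg (rpow_nonneg (sub_pos.2 h1).le _)
        (rpow_nonneg (sub_pos.2 h3).le _)) (rpow_nonneg (sub_pos.2 h2).le _)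
  · filter_upwards [ae_restrict_mem measurableSet_Ioo] with x hx
    have hu : 0 < (s - w) ^ 2 - x := sub_pos.2 hx.2
    have h2 := le_tailMajorant hq0 hA hu
    rw [show A + ((s - w) ^ 2 - x) = t ^ 2 - x by rw [hAdef]; ring] at h2
    have h3 := mul_le_mul_of_nonneg_left (inner_integral_le hq0 hw hws hx)
      (rpow_nonneg (show 0 ≤ t ^ 2 - x by linarith) (-q))
    exact h3.trans (by simp only [G]; linarith)
  · simp only [G]
    rw [integral_const_mul, integral_sub_left_eq_self (tailMajorant q A) volume,
      integral_tailMajorant hq1 hq2 hA]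
    ring
end
end

section
/- Let q ∈ (1/2,1), δ ∈ [1, 1/q], 0 ≤ s < t and w > 0. For r ∈ (s,t) set μ(r) = min(t−r, r−s) and ν(r) = max(t−r, r−s). There is a constant C depending only on q (and δ through q) such that ∫_s^t 𝟙{w < μ(r)} · [ ν(r)² − (μ(r) − w)² ]^{δ(1−2q)} dr ≤ C (t−s)^{δ(1−2q)+1} [ (t−s)² − w² ]^{δ(1/2 − q)} 𝟙{w < t−s}. -/
open MeasureTheory Real

noncomputable section

/-!
Put `L = t - s`, `m = (s + t) / 2` and `p = δ (1 - 2q)`, so that `1/q - 1 ≤ p + 1` and `p < 0`.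
The left-hand side vanishes unless `w < L / 2`. In that case, since `μ + ν = L` and
`ν - μ = 2 |r - m|`,
`ν² - (μ - w)² = (ν - μ + w) (L - w) ≥ 2 |r - m| · L / 2 = L |r - m|`,
so the integrand is at most `L ^ p |r - m| ^ p` (`integrand_le`) off the single point `r = m`.
Integrating `|r - m| ^ p` (`integral_abs_sub_rpow`) gives at most `2 L ^ (2p + 1) / (p + 1)`, and
`L ^ p ≤ (L² - w²) ^ (p / 2)` because the exponent is negative. Hence `C = 2 / (1/q - 1)` works.
-/

/-- Integrability of `|r - m| ^ p` around `m` for `p > -1`, with the value of its integral. -/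
lemma integral_abs_sub_rpow (m h p : ℝ) (hh : 0 ≤ h) (hp : -1 < p) :
    IntervalIntegrable (fun r => |r - m| ^ p) volume (m - h) (m + h) ∧
      ∫ r in (m - h)..(m + h), |r - m| ^ p = 2 * (h ^ (p + 1) / (p + 1)) := by
  have base : IntervalIntegrable (fun x : ℝ => x ^ p) volume 0 h :=
    intervalIntegral.intervalIntegrable_rpow' hp
  have baseval : ∫ x in (0 : ℝ)..h, x ^ p = h ^ (p + 1) / (p + 1) := by
    rw [integral_rpow (Or.inl hp), zero_rpow (by linarith), sub_zero]
  have right : Set.EqOn (fun r => (r - m) ^ p) (fun r => |r - m| ^ p) (Set.uIcc m (m + h)) := by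
    intro r hr
    rw [Set.uIcc_of_le (by linarith)] at hr
    simp only
    rw [abs_of_nonneg (by linarith [hr.1])]
  have left : Set.EqOn (fun r => (m - r) ^ p) (fun r => |r - m| ^ p) (Set.uIcc (m - h) m) := by
    intro r hr
    rw [Set.uIcc_of_le (by linarith)] at hr
    simp only
    rw [abs_of_nonpos (by linarith [hr.2]), neg_sub]
  have intR : IntervalIntegrable (fun r => |r - m| ^ p) volume m (m + h) := by
    have := base.comp_sub_right m
    rw [zero_add, add_comm h m] at this
    exact this.congr (fun r hr => right (Set.uIoc_subset_uIcc hr))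
  have intL : IntervalIntegrable (fun r => |r - m| ^ p) volume (m - h) m := by
    have := base.comp_sub_left m
    rw [sub_zero] at this
    exact this.symm.congr (fun r hr => left (Set.uIoc_subset_uIcc hr))
  refine ⟨intL.trans intR, ?_⟩
  rw [← intervalIntegral.integral_add_adjacent_intervals intL intR,
    ← intervalIntegral.integral_congr left, ← intervalIntegral.integral_congr right,
    intervalIntegral.integral_comp_sub_left (fun x => x ^ p) m,
    intervalIntegral.integral_comp_sub_right (fun x => x ^ p) m]
  simp only [sub_self, sub_sub_cancel, add_sub_cancel_left, baseval]
  ring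

/-- The point `r = (s + t) / 2` is excluded because `0 ^ p = 0` for `p < 0`. -/
lemma integrand_le {s t w p r : ℝ} (hst : s < t) (hw : 0 < w) (hp : p < 0)
    (hr : r ≠ (s + t) / 2) :
    (if w < min (t - r) (r - s) then
        ((max (t - r) (r - s)) ^ 2 - (min (t - r) (r - s) - w) ^ 2) ^ p
      else 0) ≤ (t - s) ^ p * |r - (s + t) / 2| ^ p := by
  have hL : 0 < t - s := by linarith
  split_ifs with h
  · have hpos : 0 < |r - (s + t) / 2| := abs_pos.mpr (sub_ne_zero.mpr hr)
    rw [← mul_rpow hL.le hpos.le]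
    refine rpow_le_rpow_of_nonpos (by positivity) ?_ hp.le
    rcases le_total (t - r) (r - s) with h1 | h1
    · rw [min_eq_left h1] at h ⊢
      rw [max_eq_right h1, abs_of_nonneg (by linarith)]
      nlinarith [mul_nonneg (sub_nonneg.mpr h1) (by linarith : 0 ≤ t - s - 2 * w),
        mul_pos hw (by linarith : 0 < t - s - w)]
    · rw [min_eq_right h1] at h ⊢
      rw [max_eq_left h1, abs_of_nonpos (by linarith)]
      nlinarith [mul_nonneg (sub_nonneg.mpr h1) (by linarith : 0 ≤ t - s - 2 * w),
        mul_pos hw (by linarith : 0 < t - s - w)]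
  · positivity

lemma integrand_nonneg (s t w p r : ℝ) (hw : 0 < w) :
    0 ≤ (if w < min (t - r) (r - s) then
        ((max (t - r) (r - s)) ^ 2 - (min (t - r) (r - s) - w) ^ 2) ^ p
      else 0) := by
  split_ifs with h
  · apply rpow_nonneg
    have h2 : min (t - r) (r - s) ≤ max (t - r) (r - s) := min_le_max
    nlinarith
  · exact le_rfl

/-- For `q ∈ (1/2,1)` there is a constant `C` depending only on `q` such that for all
`δ ∈ [1,1/q]`, `0 ≤ s < t`, `w > 0`, with `μ(r) = min(t-r,r-s)` and `ν(r) = max(t-r,r-s)`,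
`∫_s^t 𝟙{w < μ(r)} [ν(r)² - (μ(r)-w)²]^{δ(1-2q)} dr`
`≤ C (t-s)^{δ(1-2q)+1} [(t-s)²-w²]^{δ(1/2-q)} 𝟙{w < t-s}`. -/
theorem stmt_15 (q : ℝ) (hq : q ∈ Set.Ioo (1/2 : ℝ) 1) :
    ∃ C : ℝ, ∀ δ s t w : ℝ, δ ∈ Set.Icc 1 (1/q) → 0 ≤ s → s < t → 0 < w →
      (∫ r in s..t,
          if w < min (t - r) (r - s) then
            ((max (t - r) (r - s)) ^ 2 - (min (t - r) (r - s) - w) ^ 2) ^ (δ * (1 - 2 * q))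
          else 0) ≤
        C * (t - s) ^ (δ * (1 - 2 * q) + 1) * ((t - s) ^ 2 - w ^ 2) ^ (δ * (1/2 - q)) *
          (if w < t - s then 1 else 0) := by
  obtain ⟨hq1, hq2⟩ := hq
  have hq0 : 0 < q := by linarith
  have hc : 0 < 1 / q - 1 := by
    rw [sub_pos, lt_div_iff₀ hq0]; linarith
  refine ⟨2 / (1 / q - 1), ?_⟩
  intro δ s t w hδ _ hst hw
  have hL : 0 < t - s := by linarith
  have hp : δ * (1 - 2 * q) < 0 := mul_neg_of_pos_of_neg (by linarith [hδ.1]) (by linarith)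
  have hp1 : 1 / q - 1 ≤ δ * (1 - 2 * q) + 1 := by
    have h1 := mul_le_mul_of_nonneg_right hδ.2 (by linarith : 0 ≤ 2 * q - 1)
    have h2 : 1 / q * (2 * q - 1) = 2 - 1 / q := by field_simp
    linarith
  have hhalf : δ * (1 / 2 - q) = δ * (1 - 2 * q) / 2 := by ring
  rw [hhalf]
  generalize δ * (1 - 2 * q) = p at hp hp1
  rcases le_or_gt (t - s) w with hwL | hwL
  · -- For `w ≥ L ≥ μ` both sides are zero.
    have hz : ∀ r, (if w < min (t - r) (r - s) then
        ((max (t - r) (r - s)) ^ 2 - (min (t - r) (r - s) - w) ^ 2) ^ p else 0) = 0 := by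
      intro r
      rw [if_neg]
      intro h
      rw [lt_min_iff] at h
      linarith
    simp only [hz, intervalIntegral.integral_zero, if_neg (not_lt.mpr hwL), mul_zero, le_refl]
  · rw [if_pos hwL, mul_one]
    obtain ⟨hint, hval⟩ := integral_abs_sub_rpow ((s + t) / 2) ((t - s) / 2) p (by linarith)
      (by linarith)
    have e1 : (s + t) / 2 - (t - s) / 2 = s := by ring
    have e2 : (s + t) / 2 + (t - s) / 2 = t := by ring
    rw [e1, e2] at hint hval
    have hD : 0 < (t - s) ^ 2 - w ^ 2 := by nlinarith
    have hpow : (t - s) ^ p ≤ ((t - s) ^ 2 - w ^ 2) ^ (p / 2) := by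
      have : (t - s) ^ p = ((t - s) ^ 2) ^ (p / 2) := by
        rw [← rpow_natCast, ← rpow_mul hL.le]
        congr 1
        push_cast
        ring
      rw [this]
      exact rpow_le_rpow_of_nonpos hD (by nlinarith) (by linarith)
    calc _ ≤ ∫ r in s..t, (t - s) ^ p * |r - (s + t) / 2| ^ p := by
          rw [intervalIntegral.integral_of_le hst.le, intervalIntegral.integral_of_le hst.le]
          refine integral_mono_of_nonneg (ae_of_all _ fun r => integrand_nonneg s t w p r hw)
            (hint.1.const_mul _) (ae_restrict_of_ae ?_)
          filter_upwards [Measure.ae_ne volume ((s + t) / 2)] with r hr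
          exact integrand_le hst hw hp hr
      _ = (t - s) ^ p * (2 * (((t - s) / 2) ^ (p + 1) / (p + 1))) := by
          rw [intervalIntegral.integral_const_mul, hval]
      _ ≤ ((t - s) ^ 2 - w ^ 2) ^ (p / 2) * (2 * ((t - s) ^ (p + 1) / (1 / q - 1))) := by
          have : ((t - s) / 2) ^ (p + 1) ≤ (t - s) ^ (p + 1) :=
            rpow_le_rpow (by linarith) (by linarith) (by linarith)
          have h0 : 0 ≤ (t - s) ^ (p + 1) := rpow_nonneg hL.le _
          have h1 : ((t - s) / 2) ^ (p + 1) / (p + 1) ≤ (t - s) ^ (p + 1) / (1 / q - 1) :=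
            div_le_div₀ h0 this hc hp1
          have h2 : 0 ≤ ((t - s) / 2) ^ (p + 1) / (p + 1) :=
            div_nonneg (rpow_nonneg (by linarith) _) (by linarith)
          exact mul_le_mul hpow (by linarith) (by linarith) (rpow_nonneg hD.le _)
      _ = _ := by ring
end
end

section
/- Let q ∈ (1/2,1), δ ∈ [1, 1/q], 0 ≤ s < t and w > 0. For r ∈ (s,t) set μ(r) = min(t−r, r−s) and ν(r) = max(t−r, r−s). There is a constant C depending only on q such that ∫_s^t 𝟙{ν(r) > μ(r) + w} · [ ν(r)² − (μ(r) + w)² ]^{δ(1−2q)} dr ≤ C (t−s)^{δ(1−2q)+1} [ (t−s)² − w² ]^{δ(1/2 − q)} 𝟙{w < t−s}. -/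
/-!
Put `T = t - s` and `a = δ (1 - 2q) ∈ (-1, 0)`. Since `ν + μ = T` and `ν - μ = |2r - (s + t)|`, the
integrand factors: `ν² - (μ + w)² = (|2r - (s + t)| - w) (T + w)`. Substituting `u = 2r - (s + t)`
and using evenness, the integral equals `(T + w)^a (T - w)^(a+1) / (a + 1)` for `w < T`
(`integral_eq_setIntegral` and `setIntegral_eval`), and it vanishes for `T ≤ w`.

Next, `(T + w)^a (T - w)^(a+1) = (T² - w²)^(a/2) (T + w)^(a/2) (T - w)^(a/2+1)`, and the last two
factors are at most `T^(a/2)` and `T^(a/2+1)`. Finally `δ ≤ 1/q` gives `a + 1 ≥ (1 - q)/q`, so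
`C = q / (1 - q)` works.
-/

open MeasureTheory Real

noncomputable section

/-- The substitution `u = 2r - (s + t)` followed by the reduction to `u > 0`. No integrability is
needed: linear changes of variables and `integral_comp_abs` hold for arbitrary functions. -/
lemma integral_eq_setIntegral (a s t w : ℝ) (hst : s < t) (hw : 0 < w) :
    (∫ r in s..t,
      if min (t - r) (r - s) + w < max (t - r) (r - s) then
        ((max (t - r) (r - s)) ^ 2 - (min (t - r) (r - s) + w) ^ 2) ^ a
      else 0) = ∫ v in Set.Ioc w (t - s), ((v - w) * (t - s + w)) ^ a := by
  set h : ℝ → ℝ := (Set.Ioc w (t - s)).indicator (fun v => ((v - w) * (t - s + w)) ^ a) with hh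
  have key : ∀ r ∈ Set.Icc s t,
      (if min (t - r) (r - s) + w < max (t - r) (r - s) then
        ((max (t - r) (r - s)) ^ 2 - (min (t - r) (r - s) + w) ^ 2) ^ a
      else 0) = h |2 * (r - (s + t) / 2)| := by
    rintro r ⟨h1, h2⟩
    simp only [hh, Set.indicator_apply, Set.mem_Ioc]
    rcases le_total (t - r) (r - s) with h3 | h3
    · rw [min_eq_left h3, max_eq_right h3, abs_of_nonneg (by linarith)]
      refine if_congr ⟨fun h => ⟨by linarith, by linarith⟩, fun h => by linarith [h.1]⟩ ?_ rfl
      congr 1; ring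
    · rw [min_eq_right h3, max_eq_left h3, abs_of_nonpos (by linarith)]
      refine if_congr ⟨fun h => ⟨by linarith, by linarith⟩, fun h => by linarith [h.1]⟩ ?_ rfl
      congr 1; ring
  have hzero : ∀ r, r ∉ Set.Icc s t → h |2 * (r - (s + t) / 2)| = 0 := by
    intro r hr
    refine Set.indicator_of_notMem (fun hm => hr ?_) _
    have := abs_le.1 hm.2
    exact ⟨by linarith [this.1], by linarith [this.2]⟩
  rw [intervalIntegral.integral_of_le hst.le, ← integral_Icc_eq_integral_Ioc,
    setIntegral_congr_fun measurableSet_Icc key,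
    setIntegral_eq_integral_of_forall_compl_eq_zero hzero,
    integral_sub_right_eq_self (fun r => h |2 * r|) ((s + t) / 2),
    Measure.integral_comp_mul_left (fun r => h |r|) 2, integral_comp_abs, hh,
    setIntegral_indicator measurableSet_Ioc]
  have : Set.Ioi (0 : ℝ) ∩ Set.Ioc w (t - s) = Set.Ioc w (t - s) :=
    Set.inter_eq_right.2 fun v hv => hw.trans hv.1
  rw [this, abs_of_pos (by norm_num), smul_eq_mul]
  ring

lemma setIntegral_eval (a T w : ℝ) (ha : -1 < a) (hw : 0 < w) (hT : w < T) :
    ∫ v in Set.Ioc w T, ((v - w) * (T + w)) ^ a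
      = (T + w) ^ a * (T - w) ^ (a + 1) / (a + 1) := by
  have h1 : ∀ v ∈ Set.Ioc w T, ((v - w) * (T + w)) ^ a = (v - w) ^ a * (T + w) ^ a :=
    fun v hv => mul_rpow (by linarith [hv.1]) (by linarith)
  rw [setIntegral_congr_fun measurableSet_Ioc h1, integral_mul_const,
    ← intervalIntegral.integral_of_le hT.le,
    intervalIntegral.integral_comp_sub_right (fun v => v ^ a) w, sub_self,
    integral_rpow (Or.inl ha), zero_rpow (by linarith)]
  ring

lemma product_bound (a T w : ℝ) (ha : -1 < a) (ha0 : a ≤ 0) (hw : 0 < w) (hT : w < T) :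
    (T + w) ^ a * (T - w) ^ (a + 1) ≤ T ^ (a + 1) * (T ^ 2 - w ^ 2) ^ (a / 2) := by
  have hp : 0 < T + w := by linarith
  have hm : 0 < T - w := by linarith
  have hT0 : 0 < T := by linarith
  have e1 : (T + w) ^ a = (T + w) ^ (a / 2) * (T + w) ^ (a / 2) := by
    rw [← rpow_add hp]; ring_nf
  have e2 : (T - w) ^ (a + 1) = (T - w) ^ (a / 2) * (T - w) ^ (a / 2 + 1) := by
    rw [← rpow_add hm]; ring_nf
  have e3 : T ^ (a + 1) = T ^ (a / 2) * T ^ (a / 2 + 1) := by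
    rw [← rpow_add hT0]; ring_nf
  have e4 : (T ^ 2 - w ^ 2) ^ (a / 2) = (T + w) ^ (a / 2) * (T - w) ^ (a / 2) := by
    rw [← mul_rpow hp.le hm.le]; ring_nf
  have b1 : (T + w) ^ (a / 2) ≤ T ^ (a / 2) :=
    rpow_le_rpow_of_nonpos hT0 (by linarith) (by linarith)
  have b2 : (T - w) ^ (a / 2 + 1) ≤ T ^ (a / 2 + 1) :=
    rpow_le_rpow hm.le (by linarith) (by linarith)
  calc (T + w) ^ a * (T - w) ^ (a + 1)
      = ((T + w) ^ (a / 2) * (T - w) ^ (a / 2 + 1)) * (T ^ 2 - w ^ 2) ^ (a / 2) := by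
        rw [e1, e2, e4]; ring
    _ ≤ (T ^ (a / 2) * T ^ (a / 2 + 1)) * (T ^ 2 - w ^ 2) ^ (a / 2) := by
        have : 0 ≤ (T ^ 2 - w ^ 2) ^ (a / 2) := by rw [e4]; positivity
        gcongr
    _ = _ := by rw [e3]

/-- For `q ∈ (1/2,1)` there is a constant `C` depending only on `q` such that for all
`δ ∈ [1,1/q]`, `0 ≤ s < t`, `w > 0`, with `μ(r) = min(t-r,r-s)` and `ν(r) = max(t-r,r-s)`,
`∫_s^t 𝟙{ν(r) > μ(r)+w} [ν(r)² - (μ(r)+w)²]^{δ(1-2q)} dr`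
`≤ C (t-s)^{δ(1-2q)+1} [(t-s)²-w²]^{δ(1/2-q)} 𝟙{w < t-s}`. -/
theorem stmt_16 (q : ℝ) (hq : q ∈ Set.Ioo (1/2 : ℝ) 1) :
    ∃ C : ℝ, ∀ δ s t w : ℝ, δ ∈ Set.Icc 1 (1/q) → 0 ≤ s → s < t → 0 < w →
      (∫ r in s..t,
          if min (t - r) (r - s) + w < max (t - r) (r - s) then
            ((max (t - r) (r - s)) ^ 2 - (min (t - r) (r - s) + w) ^ 2) ^ (δ * (1 - 2 * q))
          else 0) ≤
        C * (t - s) ^ (δ * (1 - 2 * q) + 1) * ((t - s) ^ 2 - w ^ 2) ^ (δ * (1/2 - q)) *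
          (if w < t - s then 1 else 0) := by
  obtain ⟨hq1, hq2⟩ := hq
  refine ⟨q / (1 - q), fun δ s t w hδ _ hst hw => ?_⟩
  obtain ⟨hδ1, hδ2⟩ := hδ
  have hq0 : 0 < q := by linarith
  rw [integral_eq_setIntegral _ s t w hst hw]
  have hhalf : δ * (1 / 2 - q) = δ * (1 - 2 * q) / 2 := by ring
  rw [hhalf]
  have ha0 : δ * (1 - 2 * q) ≤ 0 := mul_nonpos_of_nonneg_of_nonpos (by linarith) (by linarith)
  have ha1 : (1 - q) / q ≤ δ * (1 - 2 * q) + 1 := by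
    have h1 : δ * (2 * q - 1) ≤ 1 / q * (2 * q - 1) :=
      mul_le_mul_of_nonneg_right hδ2 (by linarith)
    have h2 : 1 / q * (2 * q - 1) = 1 - (1 - q) / q := by field_simp; ring
    linarith
  generalize δ * (1 - 2 * q) = a at *
  have hc : 0 < (1 - q) / q := div_pos (by linarith) hq0
  split_ifs with hwT
  · rw [setIntegral_eval a (t - s) w (by linarith) hw hwT, mul_one, mul_assoc]
    have hb := product_bound a (t - s) w (by linarith) ha0 hw hwT
    have hpos : 0 ≤ (t - s + w) ^ a * (t - s - w) ^ (a + 1) :=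
      mul_nonneg (rpow_nonneg (by linarith) _) (rpow_nonneg (by linarith) _)
    have hinv : q / (1 - q) = ((1 - q) / q)⁻¹ := (inv_div _ _).symm
    rw [hinv, div_eq_inv_mul]
    exact mul_le_mul (inv_anti₀ hc ha1) hb hpos (inv_nonneg.2 hc.le)
  · rw [Set.Ioc_eq_empty hwT]
    simp
end
end

section
/- Let q ∈ (1/2,1), δ ∈ [1, 1/q], 0 ≤ s < t and w > 0. For r ∈ (s,t) set μ(r) = min(t−r, r−s) and ν(r) = max(t−r, r−s). There is a constant C depending only on q such that ∫_s^t 𝟙{|μ(r) − w| < ν(r) < μ(r) + w} · [ (w + μ(r))² − ν(r)² ]^{δ(1/2 − q)} · [ ν(r)² − (μ(r) − w)² ]^{δ(1/2 − q)} dr ≤ C (t−s)^{δ(1−2q)+1} [ (t−s)² − w² ]^{δ(1/2 − q)} 𝟙{w < t−s}. -/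
open MeasureTheory Real

noncomputable section

/-!
Write `T = t - s`, `a = δ (1/2 - q)` and `y = 2 r - s - t`, so that `ν - μ = |y|` and `ν + μ = T`.
Factoring both differences of squares,
`[(w + μ)² - ν²] [ν² - (μ - w)²] = (w - |y|) (w + T) (w + |y|) (T - w) = (T² - w²) (w² - y²)`,
and the indicator is that of `|y| < w < T` (`integrand_eq`). Hence for `w < T` the substitution
`u = y / w` evaluates the integral exactly as
`(T² - w²) ^ a * w ^ (2 a + 1) * (1/2) ∫_{-1}^1 (1 - u²) ^ a du` (`integral_arc`).
Since `δ ≤ 1/q`, the exponent satisfies `a ≥ 1/(2q) - 1 > -1/2`; therefore `2 a + 1 > 0` gives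
`w ^ (2 a + 1) ≤ T ^ (2 a + 1)`, and the last integral is at most the convergent one with exponent
`1/(2q) - 1`, which depends on `q` only.
-/

lemma intervalIntegrable_one_sub_sq_rpow {c : ℝ} (hc : -1 < c) :
    IntervalIntegrable (fun u : ℝ => (1 - u ^ 2) ^ c) volume (-1) 1 := by
  have key : IntervalIntegrable (fun u : ℝ => (1 - u ^ 2) ^ c) volume 0 1 := by
    have h1 : IntervalIntegrable (fun u : ℝ => (1 - u) ^ c) volume 0 1 := by
      have h := (intervalIntegral.intervalIntegrable_rpow' (a := 1) (b := 0) hc).comp_sub_left 1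
      simpa using h
    have h2 : ContinuousOn (fun u : ℝ => (1 + u) ^ c) (Set.uIcc 0 1) := by
      refine ContinuousOn.rpow_const (by fun_prop) ?_
      intro u hu
      rw [Set.uIcc_of_le zero_le_one] at hu
      left
      linarith [hu.1]
    refine (h1.mul_continuousOn h2).congr ?_
    intro u hu
    rw [Set.uIoc_of_le zero_le_one] at hu
    change (1 - u) ^ c * (1 + u) ^ c = (1 - u ^ 2) ^ c
    rw [← mul_rpow (by linarith [hu.2]) (by linarith [hu.1])]
    congr 1
    ring
  -- the integrand is even
  have key' : IntervalIntegrable (fun u : ℝ => (1 - u ^ 2) ^ c) volume (-1) 0 := by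
    have h := (key.comp_sub_left 0).symm
    simpa using h
  exact key'.trans key

/-- On `(s, t]` the integrand is `(T² - w²) ^ a (w² - y²) ^ a` on `|y| < w < T` and `0` elsewhere,
where `T = t - s` and `y = 2 r - s - t`. -/
lemma integrand_eq (a s t w r : ℝ) (hw : 0 < w) (hr : r ∈ Set.Ioc s t) :
    (if |min (t - r) (r - s) - w| < max (t - r) (r - s) ∧
          max (t - r) (r - s) < min (t - r) (r - s) + w then
        ((w + min (t - r) (r - s)) ^ 2 - (max (t - r) (r - s)) ^ 2) ^ a *
          ((max (t - r) (r - s)) ^ 2 - (min (t - r) (r - s) - w) ^ 2) ^ a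
      else 0) =
    if w < t - s ∧ |2 * r - s - t| < w then
      ((t - s) ^ 2 - w ^ 2) ^ a * (w ^ 2 - (2 * r - s - t) ^ 2) ^ a else 0 := by
  obtain ⟨h1, h2⟩ := hr
  have hiff : (|min (t - r) (r - s) - w| < max (t - r) (r - s) ∧
      max (t - r) (r - s) < min (t - r) (r - s) + w) ↔ (w < t - s ∧ |2 * r - s - t| < w) := by
    rw [abs_lt, abs_lt]
    rcases le_total (t - r) (r - s) with h | h
    · rw [min_eq_left h, max_eq_right h]
      constructor
      · rintro ⟨⟨_, _⟩, _⟩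
        refine ⟨?_, ?_, ?_⟩ <;> linarith
      · rintro ⟨_, _, _⟩
        refine ⟨⟨?_, ?_⟩, ?_⟩ <;> linarith
    · rw [min_eq_right h, max_eq_left h]
      constructor
      · rintro ⟨⟨_, _⟩, _⟩
        refine ⟨?_, ?_, ?_⟩ <;> linarith
      · rintro ⟨_, _, _⟩
        refine ⟨⟨?_, ?_⟩, ?_⟩ <;> linarith
  by_cases hc : w < t - s ∧ |2 * r - s - t| < w
  · rw [if_pos (hiff.2 hc), if_pos hc]
    obtain ⟨hT, hy⟩ := hc
    rw [abs_lt] at hy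
    have e1 : 0 ≤ (t - s) ^ 2 - w ^ 2 := by nlinarith
    have e2 : 0 ≤ w ^ 2 - (2 * r - s - t) ^ 2 := by nlinarith [hy.1, hy.2]
    rw [← mul_rpow e1 e2]
    rcases le_total (t - r) (r - s) with h | h
    · rw [min_eq_left h, max_eq_right h, ← mul_rpow (by nlinarith) (by nlinarith)]
      congr 1
      ring
    · rw [min_eq_right h, max_eq_left h, ← mul_rpow (by nlinarith) (by nlinarith)]
      congr 1
      ring
  · rw [if_neg (fun h => hc (hiff.1 h)), if_neg hc]

lemma integral_arc (a m w : ℝ) (hw : 0 < w) :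
    ∫ r in (m - w / 2)..(m + w / 2), (w ^ 2 - (2 * r - 2 * m) ^ 2) ^ a =
      w ^ (2 * a + 1) * (1 / 2 * ∫ u in (-1 : ℝ)..1, (1 - u ^ 2) ^ a) := by
  have h1 : ∫ r in (m - w / 2)..(m + w / 2), (w ^ 2 - (2 * r - 2 * m) ^ 2) ^ a =
      ∫ r in (m - w / 2)..(m + w / 2),
        w ^ (2 * a) * (fun u : ℝ => (1 - u ^ 2) ^ a) (2 / w * r - 2 * m / w) := by
    refine intervalIntegral.integral_congr fun r hr => ?_
    rw [Set.uIcc_of_le (by linarith)] at hr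
    obtain ⟨hr1, hr2⟩ := hr
    have hu : (2 * r - 2 * m) = w * (2 / w * r - 2 * m / w) := by field_simp
    have hfac : w ^ 2 - (2 * r - 2 * m) ^ 2 = w ^ 2 * (1 - (2 / w * r - 2 * m / w) ^ 2) := by
      rw [hu]
      ring
    have hnn : 0 ≤ 1 - (2 / w * r - 2 * m / w) ^ 2 := by
      have h0 : 0 ≤ w ^ 2 - (2 * r - 2 * m) ^ 2 := by nlinarith
      rw [hfac] at h0
      exact nonneg_of_mul_nonneg_right h0 (by positivity)
    change (w ^ 2 - (2 * r - 2 * m) ^ 2) ^ a = w ^ (2 * a) * (1 - (2 / w * r - 2 * m / w) ^ 2) ^ a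
    rw [hfac, mul_rpow (by positivity) hnn, rpow_mul hw.le, rpow_two]
  have hw0 : (2 / w) ≠ 0 := by positivity
  rw [h1, intervalIntegral.integral_const_mul,
    intervalIntegral.integral_comp_mul_sub (fun u : ℝ => (1 - u ^ 2) ^ a) hw0, rpow_add hw,
    rpow_one, smul_eq_mul]
  have e1 : 2 / w * (m - w / 2) - 2 * m / w = -1 := by field_simp; ring
  have e2 : 2 / w * (m + w / 2) - 2 * m / w = 1 := by field_simp; ring
  rw [e1, e2, inv_div]
  ring

/-- For `q ∈ (1/2,1)` there is a constant `C` depending only on `q` such that for all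
`δ ∈ [1,1/q]`, `0 ≤ s < t`, `w > 0`, with `μ(r) = min(t-r,r-s)` and `ν(r) = max(t-r,r-s)`,
`∫_s^t 𝟙{|μ(r)-w| < ν(r) < μ(r)+w} [(w+μ(r))²-ν(r)²]^{δ(1/2-q)} [ν(r)²-(μ(r)-w)²]^{δ(1/2-q)} dr`
`≤ C (t-s)^{δ(1-2q)+1} [(t-s)²-w²]^{δ(1/2-q)} 𝟙{w < t-s}`. -/
theorem stmt_17 (q : ℝ) (hq : q ∈ Set.Ioo (1/2 : ℝ) 1) :
    ∃ C : ℝ, ∀ δ s t w : ℝ, δ ∈ Set.Icc 1 (1/q) → 0 ≤ s → s < t → 0 < w →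
      (∫ r in s..t,
          if |min (t - r) (r - s) - w| < max (t - r) (r - s) ∧
              max (t - r) (r - s) < min (t - r) (r - s) + w then
            ((w + min (t - r) (r - s)) ^ 2 - (max (t - r) (r - s)) ^ 2) ^ (δ * (1/2 - q)) *
              ((max (t - r) (r - s)) ^ 2 - (min (t - r) (r - s) - w) ^ 2) ^ (δ * (1/2 - q))
          else 0) ≤
        C * (t - s) ^ (δ * (1 - 2 * q) + 1) * ((t - s) ^ 2 - w ^ 2) ^ (δ * (1/2 - q)) *
          (if w < t - s then 1 else 0) := by
  obtain ⟨hq1, hq2⟩ := hq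
  have hq0 : 0 < q := by linarith
  -- the smallest exponent `δ (1/2 - q)` over `δ ≤ 1/q`
  set c : ℝ := 1 / q * (1 / 2 - q) with hcdef
  have hc : -(1 / 2) < c := by
    have h : c = 1 / 2 / q - 1 := by
      rw [hcdef]
      field_simp
    have h' : 1 / 2 < 1 / 2 / q := by
      rw [lt_div_iff₀ hq0]
      linarith
    linarith
  refine ⟨1 / 2 * ∫ u in (-1 : ℝ)..1, (1 - u ^ 2) ^ c, ?_⟩
  intro δ s t w hδ _ hst hw
  set a : ℝ := δ * (1 / 2 - q) with hadef
  have hca : c ≤ a := mul_le_mul_of_nonpos_right hδ.2 (by linarith)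
  have hexp : δ * (1 - 2 * q) + 1 = 2 * a + 1 := by
    rw [hadef]
    ring
  rw [hexp, intervalIntegral.integral_of_le hst.le,
    setIntegral_congr_fun measurableSet_Ioc (fun r hr => integrand_eq a s t w r hw hr)]
  by_cases hwT : w < t - s
  · have hset : ∀ r, (if w < t - s ∧ |2 * r - s - t| < w then
        ((t - s) ^ 2 - w ^ 2) ^ a * (w ^ 2 - (2 * r - s - t) ^ 2) ^ a else 0) =
        (Set.Ioo ((s + t) / 2 - w / 2) ((s + t) / 2 + w / 2)).indicator
          (fun r => ((t - s) ^ 2 - w ^ 2) ^ a *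
            (w ^ 2 - (2 * r - 2 * ((s + t) / 2)) ^ 2) ^ a) r := by
      intro r
      have hiff : (w < t - s ∧ |2 * r - s - t| < w) ↔
          r ∈ Set.Ioo ((s + t) / 2 - w / 2) ((s + t) / 2 + w / 2) := by
        rw [abs_lt, Set.mem_Ioo]
        constructor
        · rintro ⟨_, _, _⟩
          constructor <;> linarith
        · rintro ⟨_, _⟩
          refine ⟨hwT, ?_, ?_⟩ <;> linarith
      have hy : 2 * r - 2 * ((s + t) / 2) = 2 * r - s - t := by ring
      by_cases hr : r ∈ Set.Ioo ((s + t) / 2 - w / 2) ((s + t) / 2 + w / 2)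
      · rw [if_pos (hiff.2 hr), Set.indicator_of_mem hr, hy]
      · rw [if_neg (fun h => hr (hiff.1 h)), Set.indicator_of_notMem hr]
    have hinter : Set.Ioc s t ∩ Set.Ioo ((s + t) / 2 - w / 2) ((s + t) / 2 + w / 2) =
        Set.Ioo ((s + t) / 2 - w / 2) ((s + t) / 2 + w / 2) := by
      refine Set.inter_eq_right.2 fun r hr => ⟨?_, ?_⟩
      · linarith [hr.1]
      · linarith [hr.2]
    simp_rw [hset]
    rw [setIntegral_indicator measurableSet_Ioo, hinter, ← integral_Ioc_eq_integral_Ioo,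
      ← intervalIntegral.integral_of_le (by linarith), intervalIntegral.integral_const_mul,
      integral_arc a _ w hw, if_pos hwT, mul_one]
    have hI : ∫ u in (-1 : ℝ)..1, (1 - u ^ 2) ^ a ≤ ∫ u in (-1 : ℝ)..1, (1 - u ^ 2) ^ c := by
      refine intervalIntegral.integral_mono_on_of_le_Ioo (by norm_num)
        (intervalIntegrable_one_sub_sq_rpow (by linarith))
        (intervalIntegrable_one_sub_sq_rpow (by linarith)) ?_
      intro u hu
      exact rpow_le_rpow_of_exponent_ge (by nlinarith [hu.1, hu.2]) (by nlinarith) hca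
    have hI0 : 0 ≤ ∫ u in (-1 : ℝ)..1, (1 - u ^ 2) ^ a := by
      refine intervalIntegral.integral_nonneg (by norm_num) fun u hu => ?_
      exact rpow_nonneg (by nlinarith [hu.1, hu.2]) _
    have hpow : w ^ (2 * a + 1) ≤ (t - s) ^ (2 * a + 1) :=
      rpow_le_rpow hw.le hwT.le (by linarith)
    have hK : 0 ≤ ((t - s) ^ 2 - w ^ 2) ^ a := rpow_nonneg (by nlinarith) _
    have hT0 : 0 ≤ (t - s) ^ (2 * a + 1) := rpow_nonneg (by linarith) _
    calc _ ≤ ((t - s) ^ 2 - w ^ 2) ^ a * ((t - s) ^ (2 * a + 1) *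
          (1 / 2 * ∫ u in (-1 : ℝ)..1, (1 - u ^ 2) ^ c)) := by gcongr
      _ = _ := by ring
  · simp [hwT]
end
end
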